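/- arXiv:1109.5726 — 2 statements merged into one kernel-verified Lean document; each statement's English description precedes it below -/
import Mathlib

section
/- Let X, Y be Banach spaces and ‖·‖ a norm on the direct sum X ⊕ Y. Suppose x* ∈ X* and y* ∈ Y* (viewed as functionals on X ⊕ Y) satisfy: ‖x*‖ = ‖x* + y*‖ = 1; the partial Fréchet differential ∂/∂x* of the dual norm exists at x*; and the partial Fréchet differential ∂/∂y* of the dual norm exists at x* + y* and equals 0. Then the dual norm is Fréchet differentiable at x* + y*. -/
set_option synthInstance.maxHeartbeats 1000000
set_option maxHeartbeats 1000000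

/-- The annihilator of a subspace `S` of `Z` inside the continuous dual of `Z`:
functionals vanishing on `S`.  Functionals in `annih Z Ysub` play the role of
elements of `X*` when `Z = X ⊕ Y`. -/
noncomputable def annih (Z : Type*) [NormedAddCommGroup Z] [NormedSpace ℝ Z] (S : Submodule ℝ Z) :
    Submodule ℝ (Z →L[ℝ] ℝ) where
  carrier := {f | ∀ v ∈ S, f v = 0}
  add_mem' := by intro a b ha hb v hv; simp [ha v hv, hb v hv]
  zero_mem' := by intro v hv; simp
  smul_mem' := by intro c a ha v hv; simp [ha v hv]

theorem aux_slice {Z : Type*} [NormedAddCommGroup Z] [NormedSpace ℝ Z]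
    (S : Submodule ℝ (Z →L[ℝ] ℝ)) (f : Z →L[ℝ] ℝ) (hf : ‖f‖ = 1) (G : S →L[ℝ] ℝ)
    (h : HasFDerivAt (fun u : S => ‖f + (u : Z →L[ℝ] ℝ)‖) G 0) {ε : ℝ} (hε : 0 < ε) :
    ∃ η > 0, ∀ z : Z, ‖z‖ ≤ 1 → 1 - η ≤ f z → ∀ u : S,
      (u : Z →L[ℝ] ℝ) z - G u ≤ ε * ‖u‖ := by
  replace h := (@hasFDerivAt_iff_isLittleO_nhds_zero ℝ _ S _ _ ℝ _ _
    (fun u : S => ‖f + (u : Z →L[ℝ] ℝ)‖) G 0).1 h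
  have h2 := h.def (half_pos hε)
  rw [Metric.eventually_nhds_iff] at h2
  obtain ⟨δ, hδ, h3⟩ := h2
  refine ⟨ε / 2 * (δ / 2), by positivity, fun z hz hfz u => ?_⟩
  by_cases hu : u = 0
  · subst hu; simp
  have hun : 0 < ‖u‖ := by
    rw [Submodule.coe_norm]
    exact norm_pos_iff.mpr fun h0 => hu (Subtype.ext h0)
  set c : ℝ := δ / 2 / ‖u‖ with hc
  have hcpos : 0 < c := by positivity
  have hcu : ‖c • u‖ = δ / 2 := by
    rw [Submodule.coe_norm, Submodule.coe_smul, norm_smul, ← Submodule.coe_norm, Real.norm_of_nonneg hcpos.le, hc]; field_simp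
  have h4 := h3 (y := c • u) (by
    have hd : dist (c • u) 0 = ‖c • u‖ := by
      rw [Subtype.dist_eq, Submodule.coe_norm, Submodule.coe_zero]
      exact dist_zero_right _
    rw [hd, hcu]; linarith)
  rw [hcu] at h4
  have h5 := (abs_le.mp h4).2
  simp only [zero_add, Submodule.coe_zero, add_zero, hf, map_smul, Submodule.coe_smul,
    smul_eq_mul] at h5
  have h6 : (f + c • (u : Z →L[ℝ] ℝ)) z ≤ ‖f + c • (u : Z →L[ℝ] ℝ)‖ :=
    (le_abs_self _).trans ((f + c • (u : Z →L[ℝ] ℝ)).unit_le_opNorm z hz)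
  simp only [ContinuousLinearMap.add_apply, ContinuousLinearMap.smul_apply, smul_eq_mul] at h6
  have h7 : c * ((u : Z →L[ℝ] ℝ) z - G u) ≤ c * (ε * ‖u‖) := by
    have : c * (ε * ‖u‖) = ε * (δ / 2) := by rw [hc]; field_simp
    rw [this]; linarith
  exact le_of_mul_le_mul_left h7 hcpos

theorem aux_norm_le {Z : Type*} [NormedAddCommGroup Z] [NormedSpace ℝ Z]
    (f : Z →L[ℝ] ℝ) {C : ℝ} (hC : 0 ≤ C) (h : ∀ z, ‖z‖ ≤ 1 → f z ≤ C) : ‖f‖ ≤ C := by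
  refine ContinuousLinearMap.opNorm_le_of_unit_norm hC fun z hz => ?_
  rw [Real.norm_eq_abs, abs_le]
  have h1 := h z hz.le
  have h2 := h (-z) (by rw [norm_neg]; exact hz.le)
  rw [map_neg] at h2
  constructor <;> linarith

/-- Let `Z = X ⊕ Y` be a Banach space which is the direct sum of two
closed subspaces `Xsub` and `Ysub`, and identify `X*` (resp. `Y*`) with the space of
continuous functionals on `Z` vanishing on `Ysub` (resp. `Xsub`).  Suppose `x* ∈ X*`,
`y* ∈ Y*` satisfy `‖x*‖ = ‖x* + y*‖ = 1`, the partial Fréchet differential `∂/∂x*` of the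
dual norm exists at `x*`, and the partial Fréchet differential `∂/∂y*` of the dual norm at
`x* + y*` exists and equals `0`.  Then the dual norm is Fréchet differentiable at
`x* + y*`. -/
theorem frechet_differentiable_of_partials
    (Z : Type*) [NormedAddCommGroup Z] [NormedSpace ℝ Z] [CompleteSpace Z]
    (Xsub Ysub : Submodule ℝ Z)
    (hXc : IsClosed (Xsub : Set Z)) (hYc : IsClosed (Ysub : Set Z))
    (hcompl : IsCompl Xsub Ysub)
    (xs ys : Z →L[ℝ] ℝ)
    (hxs : xs ∈ annih Z Ysub) (hys : ys ∈ annih Z Xsub)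
    (hxn : ‖xs‖ = 1) (hxyn : ‖xs + ys‖ = 1)
    (hpartX : DifferentiableAt ℝ
      (fun u : annih Z Ysub => ‖xs + (u : Z →L[ℝ] ℝ)‖) 0)
    (hpartY : HasFDerivAt
      (fun v : annih Z Xsub => ‖xs + ys + (v : Z →L[ℝ] ℝ)‖)
      (0 : (annih Z Xsub) →L[ℝ] ℝ) 0) :
    DifferentiableAt ℝ (fun g : Z →L[ℝ] ℝ => ‖g‖) (xs + ys) := by
  obtain ⟨G, hG⟩ := hpartX
  have htop := Submodule.IsCompl.isTopCompl_of_isClosed hcompl hXc hYc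
  set p : Z →L[ℝ] Z := Xsub.projectionL Ysub htop with hp
  have hpX : ∀ v ∈ Xsub, p v = v := fun v hv => Submodule.projectionL_apply_left htop ⟨v, hv⟩
  have hpY : ∀ v ∈ Ysub, p v = 0 := fun v hv => Submodule.projectionL_apply_right htop ⟨v, hv⟩
  let P : (Z →L[ℝ] ℝ) →L[ℝ] annih Z Ysub :=
    ((ContinuousLinearMap.compL ℝ Z Z ℝ).flip p).codRestrict (annih Z Ysub) (by
      intro g v hv
      simp [hpY v hv])
  have hPval : ∀ g, ((P g : annih Z Ysub) : Z →L[ℝ] ℝ) = g.comp p := fun g => rfl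
  have hQmem : ∀ g : Z →L[ℝ] ℝ, g - g.comp p ∈ annih Z Xsub := by
    intro g v hv
    simp [hpX v hv]
  have hPn : ∀ g, ‖P g‖ ≤ ‖p‖ * ‖g‖ := by
    intro g
    rw [← Submodule.norm_coe, hPval, mul_comm]
    exact g.opNorm_comp_le p
  have hQn : ∀ g : Z →L[ℝ] ℝ, ‖g - g.comp p‖ ≤ (1 + ‖p‖) * ‖g‖ := by
    intro g
    have h1 := norm_sub_le g (g.comp p)
    have h2 := g.opNorm_comp_le p
    nlinarith
  set L : (Z →L[ℝ] ℝ) →L[ℝ] ℝ := G.comp P with hL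
  set K : ℝ := 1 + 2 * ‖p‖ with hK
  have hKpos : 0 < K := by positivity
  -- upper estimate
  have upper : ∀ ε > 0, ∃ δ > 0, ∀ g : Z →L[ℝ] ℝ, ‖g‖ < δ →
      ‖xs + ys + g‖ ≤ 1 + L g + ε * ‖g‖ := by
    intro ε hε
    have hε' : 0 < ε / K := by positivity
    obtain ⟨η₁, hη₁, H1⟩ := aux_slice _ xs hxn G hG hε'
    have hε2 : 0 < min (ε / K) (η₁ / 2 / (‖ys‖ + 1)) := by positivity
    obtain ⟨η₂, hη₂, H2⟩ := aux_slice _ (xs + ys) hxyn 0 hpartY hε2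
    set M : ℝ := 1 + ‖L‖ with hM
    have hMpos : 0 < M := by positivity
    refine ⟨min 1 (min (η₁ / 2) η₂) / M, by positivity, fun g hg => ?_⟩
    rw [lt_div_iff₀ hMpos] at hg
    have hg1 : ‖g‖ * M < 1 := hg.trans_le (min_le_left _ _)
    have hg2 : ‖g‖ * M < η₁ / 2 := hg.trans_le ((min_le_right _ _).trans (min_le_left _ _))
    have hg3 : ‖g‖ * M < η₂ := hg.trans_le ((min_le_right _ _).trans (min_le_right _ _))
    have hLg : |L g| ≤ ‖L‖ * ‖g‖ := L.le_opNorm g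
    have hLg' := (abs_le.mp hLg).1
    have hgn := norm_nonneg g
    have hεg : 0 ≤ ε * ‖g‖ := by positivity
    have hMexp : ‖g‖ * M = ‖g‖ + ‖L‖ * ‖g‖ := by rw [hM]; ring
    refine aux_norm_le _ (by linarith) fun z hz => ?_
    have hgz : g z ≤ ‖g‖ := (le_abs_self _).trans (g.unit_le_opNorm z hz)
    have hadd : (xs + ys + g) z = (xs + ys) z + g z := rfl
    have hz1 : (xs + ys) z ≤ 1 :=
      hxyn ▸ (le_abs_self _).trans ((xs + ys).unit_le_opNorm z hz)
    rw [hadd]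
    by_cases hcase : (xs + ys) z < 1 - ‖g‖ * M
    · linarith
    push Not at hcase
    have H2z := H2 z hz (by linarith)
    have hyz := H2z ⟨ys, hys⟩
    have hQ := H2z ⟨_, hQmem g⟩
    simp only [Submodule.coe_norm, ContinuousLinearMap.zero_apply, sub_zero] at hyz hQ
    have hyz2 : ys z ≤ η₁ / 2 := by
      refine hyz.trans ?_
      calc _ ≤ (η₁ / 2 / (‖ys‖ + 1)) * (‖ys‖ + 1) := by
            gcongr
            · exact min_le_right _ _
            · linarith
        _ = η₁ / 2 := by field_simp
    have hxz : 1 - η₁ ≤ xs z := by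
      have : (xs + ys) z = xs z + ys z := rfl
      linarith
    have hPz := H1 z hz hxz (P g)
    rw [hPval] at hPz
    have hQ2 : (g - g.comp p) z ≤ ε / K * ((1 + ‖p‖) * ‖g‖) := by
      refine hQ.trans ?_
      gcongr
      · exact min_le_left _ _
      · exact hQn g
    have hP2 : (g.comp p) z - L g ≤ ε / K * (‖p‖ * ‖g‖) := by
      refine hPz.trans ?_
      gcongr
      exact hPn g
    have hsplit : (g - g.comp p) z = g z - (g.comp p) z := rfl
    have hsum : ε / K * ((1 + ‖p‖) * ‖g‖) + ε / K * (‖p‖ * ‖g‖) = ε * ‖g‖ := by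
      have : ε / K * ((1 + ‖p‖) * ‖g‖) + ε / K * (‖p‖ * ‖g‖) = ε / K * K * ‖g‖ := by
        rw [hK]; ring
      rw [this, div_mul_cancel₀ _ hKpos.ne']
    linarith
  refine ⟨L, ?_⟩
  rw [hasFDerivAt_iff_isLittleO_nhds_zero, Asymptotics.isLittleO_iff]
  intro ε hε
  obtain ⟨δ, hδ, H⟩ := upper ε hε
  rw [Metric.eventually_nhds_iff]
  refine ⟨δ, hδ, fun g hg => ?_⟩
  rw [dist_zero_right] at hg
  have h1 := H g hg
  have h2 := H (-g) (by rwa [norm_neg])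
  rw [map_neg, norm_neg] at h2
  have h3 : 2 ≤ ‖xs + ys + g‖ + ‖xs + ys + -g‖ := by
    have h4 := norm_add_le (xs + ys + g) (xs + ys + -g)
    have h5 : xs + ys + g + (xs + ys + -g) = (2 : ℝ) • (xs + ys) := by
      rw [two_smul]; abel
    rw [h5, norm_smul, hxyn] at h4
    simpa using h4
  rw [hxyn, Real.norm_eq_abs, abs_le]
  constructor <;> linarith
end

section
/- If a separable Banach space X contains an isometric copy of every separable reflexive Banach space whose norm (equivalently whose dual norm) is Fréchet smooth, then X contains an isometric copy of every separable Banach space. The same conclusion holds if X contains an isometric copy of every separable Banach space with Fréchet smooth dual. -/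
open Set Filter Topology
namespace FSU

/-! ### Reflexivity -/

def Refl (Y : Type) [NormedAddCommGroup Y] [NormedSpace ℝ Y] : Prop :=
  Function.Surjective (NormedSpace.inclusionInDoubleDual ℝ Y)

section refl
variable {Y Y' : Type} [NormedAddCommGroup Y] [NormedSpace ℝ Y]
  [NormedAddCommGroup Y'] [NormedSpace ℝ Y']

theorem Refl.exists_rep (h : Refl Y) (F : StrongDual ℝ (StrongDual ℝ Y)) :
    ∃ y : Y, ∀ f : StrongDual ℝ Y, F f = f y := by
  obtain ⟨y, rfl⟩ := h F
  exact ⟨y, fun f => rfl⟩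

theorem refl_of_rep (h : ∀ F : StrongDual ℝ (StrongDual ℝ Y), ∃ y : Y,
    ∀ f : StrongDual ℝ Y, F f = f y) : Refl Y := by
  intro F
  obtain ⟨y, hy⟩ := h F
  exact ⟨y, by ext f; simp [hy]⟩

theorem Refl.congr (h : Refl Y) (e : Y ≃L[ℝ] Y') : Refl Y' := by
  apply refl_of_rep
  intro F
  obtain ⟨y, hy⟩ := h.exists_rep
    (F.comp ((ContinuousLinearMap.compL ℝ Y' Y ℝ).flip (e.symm : Y' →L[ℝ] Y)))
  refine ⟨e y, fun f => ?_⟩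
  have := hy (f.comp (e : Y →L[ℝ] Y'))
  simp only [ContinuousLinearMap.comp_apply, ContinuousLinearMap.flip_apply,
    ContinuousLinearMap.compL_apply] at this
  have h2 : f = (f.comp (e : Y →L[ℝ] Y')).comp (e.symm : Y' →L[ℝ] Y) := by
    ext; simp
  rw [← h2] at this
  exact this

theorem Refl.prod (h : Refl Y) (h' : Refl Y') : Refl (Y × Y') := by
  apply refl_of_rep
  intro F
  obtain ⟨y, hy⟩ := h.exists_rep
    (F.comp ((ContinuousLinearMap.compL ℝ (Y × Y') Y ℝ).flip (ContinuousLinearMap.fst ℝ Y Y')))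
  obtain ⟨y', hy'⟩ := h'.exists_rep
    (F.comp ((ContinuousLinearMap.compL ℝ (Y × Y') Y' ℝ).flip (ContinuousLinearMap.snd ℝ Y Y')))
  refine ⟨(y, y'), fun f => ?_⟩
  have h1 := hy (f.comp (ContinuousLinearMap.inl ℝ Y Y'))
  have h2 := hy' (f.comp (ContinuousLinearMap.inr ℝ Y Y'))
  simp only [ContinuousLinearMap.comp_apply, ContinuousLinearMap.flip_apply,
    ContinuousLinearMap.compL_apply] at h1 h2
  have h3 : f = (f.comp (ContinuousLinearMap.inl ℝ Y Y')).comp (ContinuousLinearMap.fst ℝ Y Y') +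
     (f.comp (ContinuousLinearMap.inr ℝ Y Y')).comp (ContinuousLinearMap.snd ℝ Y Y') := by
    ext <;> simp [show f (0, 0) = 0 from map_zero f]
  rw [h3, map_add, h1, h2]
  simp [← map_add]

theorem refl_finite [FiniteDimensional ℝ Y] : Refl Y := by
  apply refl_of_rep
  intro F
  -- use algebraic reflexivity
  let φ : Module.Dual ℝ (Module.Dual ℝ Y) :=
    F.toLinearMap.comp (LinearMap.toContinuousLinearMap (𝕜 := ℝ) (E := Y) (F' := ℝ)).toLinearMap
  obtain ⟨y, hy⟩ := (Module.bijective_dual_eval ℝ Y).2 φ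
  refine ⟨y, fun f => ?_⟩
  have := congrArg (fun g => g (f : Y →ₗ[ℝ] ℝ)) hy
  simp only [Module.Dual.eval_apply] at this
  rw [show f y = (f : Y →ₗ[ℝ] ℝ) y from rfl, this]
  simp only [φ, LinearMap.comp_apply]
  change F f = F _
  congr 1

theorem Refl.exists_attain (h : Refl Y) (f : StrongDual ℝ Y) (hf : f ≠ 0) :
    ∃ y : Y, ‖y‖ = 1 ∧ f y = ‖f‖ := by
  obtain ⟨F, hF, hFf⟩ := exists_dual_vector ℝ f (norm_ne_zero_iff.2 hf)
  obtain ⟨y, hy⟩ := h.exists_rep F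
  have e : NormedSpace.inclusionInDoubleDual ℝ Y y = F := by ext g; simp [hy]
  refine ⟨y, ?_, by rw [← hy, hFf]; simp⟩
  have := (NormedSpace.inclusionInDoubleDualLi (E := Y) ℝ).norm_map y
  rw [← this, ← hF, ← e]; rfl

/-- Weak limits along ultrafilters. -/
theorem Refl.exists_weak_limit (h : Refl Y) (U : Ultrafilter ℕ) (u : ℕ → Y) (C : ℝ)
    (hu : ∀ n, ‖u n‖ ≤ C) :
    ∃ y : Y, ∀ f : StrongDual ℝ Y, Tendsto (fun n => f (u n)) U (𝓝 (f y)) := by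
  have key : ∀ f : StrongDual ℝ Y, ∃ t : ℝ, Tendsto (fun n => f (u n)) U (𝓝 t) := by
    intro f
    have hc : IsCompact (Metric.closedBall (0:ℝ) (‖f‖ * C)) := isCompact_closedBall _ _
    have := hc.ultrafilter_le_nhds (U.map (fun n => f (u n))) (by
      simp only [le_principal_iff, Ultrafilter.mem_coe, Ultrafilter.mem_map]
      apply Filter.univ_mem'
      intro n
      simp only [mem_preimage, Metric.mem_closedBall, dist_zero_right]
      exact (f.le_opNorm _).trans (by gcongr; exact hu n))
    obtain ⟨t, -, ht⟩ := this
    exact ⟨t, ht⟩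
  choose t ht using key
  let F0 : StrongDual ℝ Y →ₗ[ℝ] ℝ :=
    { toFun := t
      map_add' := fun f g => tendsto_nhds_unique (ht (f + g)) ((ht f).add (ht g))
      map_smul' := fun c f => tendsto_nhds_unique (ht (c • f)) ((ht f).const_smul c) }
  let F : StrongDual ℝ (StrongDual ℝ Y) := F0.mkContinuous C (by
    intro f
    apply le_of_tendsto (ht f).norm
    apply Filter.univ_mem'
    intro n
    rw [mul_comm]
    exact (f.le_opNorm _).trans (by gcongr; exact hu n))
  obtain ⟨y, hy⟩ := h.exists_rep F
  refine ⟨y, fun f => ?_⟩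
  rw [← hy f]
  exact ht f

end refl

/-! ### Hilbert sums -/

abbrev HS {ι : Type} (Y : ι → Type) [∀ i, NormedAddCommGroup (Y i)] : Type := lp Y 2

section HS
variable {ι : Type} [DecidableEq ι] {Y : ι → Type} [∀ i, NormedAddCommGroup (Y i)]
  [∀ i, NormedSpace ℝ (Y i)]

theorem HS.hasSum_sq (y : HS Y) : HasSum (fun i => ‖y i‖ ^ 2) (‖y‖ ^ 2) := by
  have := lp.hasSum_norm (p := 2) (by norm_num) y
  simpa using this

theorem HS.norm_sum_single (f : ∀ i, Y i) (s : Finset ι) :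
    ‖∑ i ∈ s, lp.single 2 i (f i)‖ ^ 2 = ∑ i ∈ s, ‖f i‖ ^ 2 := by
  have := lp.norm_sum_single (p := 2) (by norm_num) f s
  simpa using this

theorem HS.norm_compl (y : HS Y) (s : Finset ι) :
    ‖y - ∑ i ∈ s, lp.single 2 i (y i)‖ ^ 2 = ‖y‖ ^ 2 - ∑ i ∈ s, ‖y i‖ ^ 2 := by
  have := lp.norm_compl_sum_single (p := 2) (by norm_num) y s
  simpa using this

theorem HS.norm_apply_le (y : HS Y) (i : ι) : ‖y i‖ ≤ ‖y‖ :=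
  lp.norm_apply_le_norm (by norm_num) y i

noncomputable def HS.proj (i : ι) : HS Y →L[ℝ] Y i :=
  LinearMap.mkContinuous
    { toFun := fun y => y i, map_add' := fun _ _ => rfl, map_smul' := fun _ _ => rfl } 1
    (fun y => by rw [one_mul]; exact HS.norm_apply_le y i)

@[simp] theorem HS.proj_apply (i : ι) (y : HS Y) : HS.proj i y = y i := rfl

noncomputable def HS.sg (i : ι) : Y i →L[ℝ] HS Y := lp.singleContinuousLinearMap ℝ Y 2 i

theorem HS.sg_apply (i : ι) (y : Y i) : HS.sg i y = lp.single 2 i y := rfl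

theorem HS.sg_self (i : ι) (y : Y i) : (HS.sg i y : HS Y) i = y := by
  rw [HS.sg_apply, lp.single_apply_self]

theorem HS.sg_ne {i j : ι} (y : Y i) (h : j ≠ i) : (HS.sg i y : HS Y) j = 0 := by
  rw [HS.sg_apply, lp.single_apply_ne _ _ _ h]

theorem HS.norm_sg (i : ι) (y : Y i) : ‖(HS.sg i y : HS Y)‖ = ‖y‖ := by
  rw [HS.sg_apply, lp.norm_single (by norm_num)]

theorem HS.hasSum_sg (y : HS Y) : HasSum (fun i => HS.sg i (y i)) y :=
  lp.hasSum_single (p := 2) (by norm_num) y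

theorem HS.separable [Countable ι] [∀ i, TopologicalSpace.SeparableSpace (Y i)] :
    TopologicalSpace.SeparableSpace (HS Y) := by
  rw [← TopologicalSpace.isSeparable_univ_iff]
  have h1 : TopologicalSpace.IsSeparable (⋃ i, range (HS.sg (Y := Y) i)) :=
    TopologicalSpace.IsSeparable.iUnion (fun i => TopologicalSpace.isSeparable_range (HS.sg i).continuous)
  have h2 := (h1.span (R := ℝ)).closure
  refine h2.mono ?_
  intro y _
  refine mem_closure_of_tendsto (HS.hasSum_sg y) (Eventually.of_forall fun s => ?_)
  exact Submodule.sum_mem _ fun i _ => Submodule.subset_span (mem_iUnion.2 ⟨i, mem_range_self _⟩)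

/-- the finite truncation of a functional -/
theorem HS.dual_tail (f : StrongDual ℝ (HS Y)) (ε : ℝ) (hε : 0 < ε) :
    ∃ s : Finset ι, ‖f - ∑ i ∈ s, (f.comp (HS.sg i)).comp (HS.proj i)‖ ≤ ε := by
  have hdec : ∀ (s : Finset ι) (y : HS Y),
      (f - ∑ i ∈ s, (f.comp (HS.sg i)).comp (HS.proj i)) y = f (y - ∑ i ∈ s, HS.sg i (y i)) := by
    intro s y
    simp
  by_contra! hcon
  -- gliding hump: a norm-bounded sequence of blocks
  have hblock : ∀ s : Finset ι, ∃ (t : Finset ι) (v : ∀ i, Y i), Disjoint s t ∧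
      ∑ i ∈ t, ‖v i‖ ^ 2 ≤ 1 ∧ ε / 2 < f (∑ i ∈ t, HS.sg i (v i)) := by
    intro s
    have hs := hcon s
    obtain ⟨x, hx1, hx2⟩ := ContinuousLinearMap.exists_lt_apply_of_lt_opNorm _ hs
    obtain ⟨y, hy1, hy2⟩ : ∃ y : HS Y, ‖y‖ < 1 ∧ ε < f (y - ∑ i ∈ s, HS.sg i (y i)) := by
      rw [hdec] at hx2
      rcases abs_cases (f (x - ∑ i ∈ s, HS.sg i (x i))) with h | h
      · exact ⟨x, hx1, by rw [← h.1]; exact hx2⟩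
      · refine ⟨-x, by simpa using hx1, ?_⟩
        have : (-x - ∑ i ∈ s, HS.sg i ((-x : HS Y) i)) = -(x - ∑ i ∈ s, HS.sg i (x i)) := by
          have : ∀ i, (-x : HS Y) i = - x i := fun i => rfl
          simp only [this, map_neg, Finset.sum_neg_distrib]; abel
        rw [this, map_neg, ← h.1]; exact hx2
    have hlim : Tendsto (fun t : Finset ι => f (∑ i ∈ t, HS.sg i (y i) - ∑ i ∈ s, HS.sg i (y i)))
        atTop (𝓝 (f (y - ∑ i ∈ s, HS.sg i (y i)))) :=
      (f.continuous.tendsto _).comp ((HS.hasSum_sg y).sub_const _)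
    obtain ⟨t, ht1, ht2⟩ := ((hlim.eventually (lt_mem_nhds (show ε/2 < _ by linarith))).and
      (eventually_ge_atTop s)).exists
    have ht2 : s ⊆ t := ht2
    refine ⟨t \ s, fun i => y i, Finset.disjoint_sdiff, ?_, ?_⟩
    · have h1 := sum_le_hasSum (t \ s) (fun i _ => sq_nonneg (‖y i‖)) (HS.hasSum_sq y)
      have : ‖y‖ ^ 2 ≤ 1 := by nlinarith [norm_nonneg y]
      linarith
    · rw [← Finset.sum_sdiff ht2, add_sub_cancel_right] at ht1
      exact ht1
  -- iterate: vectors with m blocks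
  have hiter : ∀ m : ℕ, ∃ (t : Finset ι) (v : ∀ i, Y i), ∑ i ∈ t, ‖v i‖ ^ 2 ≤ m ∧
      m * (ε / 2) ≤ f (∑ i ∈ t, HS.sg i (v i)) := by
    intro m
    induction m with
    | zero => exact ⟨∅, fun i => 0, by simp, by simp⟩
    | succ m ih =>
      obtain ⟨t, v, h1, h2⟩ := ih
      obtain ⟨t', v', hd, h1', h2'⟩ := hblock t
      obtain ⟨w, hw⟩ : ∃ w : ∀ i, Y i, w = fun i => if i ∈ t then v i else v' i := ⟨_, rfl⟩
      have e1 : ∀ i ∈ t, w i = v i := fun i hi => by simp [hw, hi]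
      have e2 : ∀ i ∈ t', w i = v' i := fun i hi => by
        simp [hw, Finset.disjoint_right.1 hd hi]
      refine ⟨t ∪ t', w, ?_, ?_⟩
      · rw [Finset.sum_union hd, Finset.sum_congr rfl (fun i hi => by rw [e1 i hi]),
          Finset.sum_congr (s₁ := t') rfl (fun i hi => by rw [e2 i hi])]
        push_cast; linarith
      · rw [Finset.sum_union hd, Finset.sum_congr rfl (fun i hi => by rw [e1 i hi]),
          Finset.sum_congr (s₁ := t') rfl (fun i hi => by rw [e2 i hi]), map_add]
        push_cast; linarith
  obtain ⟨m, hm⟩ := exists_nat_gt ((‖f‖ / (ε / 2)) ^ 2)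
  obtain ⟨t, v, h1, h2⟩ := hiter m
  have h3 : ‖∑ i ∈ t, HS.sg i (v i)‖ ^ 2 ≤ m := by
    rw [show (∑ i ∈ t, HS.sg i (v i)) = ∑ i ∈ t, lp.single 2 i (v i) from rfl,
      HS.norm_sum_single]; exact h1
  have h4 : m * (ε / 2) ≤ ‖f‖ * ‖∑ i ∈ t, HS.sg i (v i)‖ :=
    h2.trans ((le_abs_self _).trans (f.le_opNorm _))
  set a := ‖∑ i ∈ t, HS.sg i (v i)‖
  have ha : 0 ≤ a := norm_nonneg _
  have hmpos : (0:ℝ) < m := lt_of_le_of_lt (sq_nonneg _) hm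
  have h5 : (m * (ε/2)) ^ 2 ≤ ‖f‖ ^ 2 * m := by
    calc (m * (ε/2)) ^ 2 ≤ (‖f‖ * a) ^ 2 := by gcongr
      _ = ‖f‖ ^ 2 * a ^ 2 := by ring
      _ ≤ _ := by gcongr
  rw [div_pow, div_lt_iff₀ (by positivity)] at hm
  have : (m:ℝ) * ‖f‖ ^ 2 < m * (m * (ε/2)^2) := by gcongr
  nlinarith

theorem HS.refl (h : ∀ i, Refl (Y i)) : Refl (HS Y) := by
  apply refl_of_rep
  intro F
  have hy : ∀ i, ∃ y : Y i, ∀ g : StrongDual ℝ (Y i), F (g.comp (HS.proj i)) = g y := by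
    intro i
    obtain ⟨y, hy⟩ := (h i).exists_rep
      (F.comp ((ContinuousLinearMap.compL ℝ (HS Y) (Y i) ℝ).flip (HS.proj i)))
    exact ⟨y, fun g => hy g⟩
  choose y hy using hy
  have hbound : ∀ s : Finset ι, ∑ i ∈ s, ‖y i‖ ^ 2 ≤ ‖F‖ ^ 2 := by
    intro s
    have hg : ∀ i, ∃ g : StrongDual ℝ (Y i), ‖g‖ ≤ 1 ∧ g (y i) = ‖y i‖ := by
      intro i
      obtain ⟨g, hg, hg'⟩ := exists_dual_vector'' ℝ (y i)
      exact ⟨g, hg, by simpa using hg'⟩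
    choose g hg hg' using hg
    set S := ∑ i ∈ s, ‖y i‖ ^ 2 with hS
    have hS0 : 0 ≤ S := Finset.sum_nonneg fun i _ => sq_nonneg _
    let f : StrongDual ℝ (HS Y) := ∑ i ∈ s, ‖y i‖ • (g i).comp (HS.proj i)
    have hFf : F f = S := by
      simp only [f, map_sum, map_smul, hy, hg', smul_eq_mul, hS, sq]
    have hf : ‖f‖ ≤ Real.sqrt S := by
      refine ContinuousLinearMap.opNorm_le_bound _ (Real.sqrt_nonneg _) fun v => ?_
      have e : f v = ∑ i ∈ s, ‖y i‖ * g i (v i) := by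
        simp [f]
      have e1 : ‖f v‖ ≤ ∑ i ∈ s, ‖y i‖ * ‖v i‖ := by
        rw [e]
        refine (norm_sum_le _ _).trans (Finset.sum_le_sum fun i _ => ?_)
        rw [norm_mul, norm_norm]
        gcongr
        exact ((g i).le_opNorm _).trans (by nlinarith [norm_nonneg (v i), hg i])
      have e2 := Finset.sum_mul_sq_le_sq_mul_sq s (fun i => ‖y i‖) (fun i => ‖v i‖)
      have e3 := sum_le_hasSum s (fun i _ => sq_nonneg (‖v i‖)) (HS.hasSum_sq v)
      have e4 : (∑ i ∈ s, ‖y i‖ * ‖v i‖) ^ 2 ≤ (Real.sqrt S * ‖v‖) ^ 2 := by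
        rw [mul_pow, Real.sq_sqrt hS0]
        exact e2.trans (by gcongr)
      exact e1.trans (abs_le_of_sq_le_sq' e4 (by positivity)).2
    have h1 : S ≤ ‖F‖ * Real.sqrt S := by
      refine hFf.symm.le.trans ?_
      exact (le_abs_self _).trans ((F.le_opNorm _).trans (by gcongr))
    have h2 : Real.sqrt S ≤ ‖F‖ := by
      by_contra! hc
      have h3 := Real.mul_self_sqrt hS0
      have : 0 < Real.sqrt S := lt_of_le_of_lt (norm_nonneg F) hc
      nlinarith
    calc S = (Real.sqrt S) ^ 2 := (Real.sq_sqrt hS0).symm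
      _ ≤ _ := by gcongr
  have hmem : Memℓp y 2 := by
    apply memℓp_gen' (C := ‖F‖ ^ 2)
    intro s
    simpa using hbound s
  let v : HS Y := ⟨y, hmem⟩
  refine ⟨v, fun f => ?_⟩
  by_contra hne
  have hpos : 0 < |F f - f v| := abs_pos.2 (sub_ne_zero.2 hne)
  set K := ‖F‖ + ‖v‖ + 1 with hK
  have hKpos : 0 < K := by positivity
  obtain ⟨s, hs⟩ := HS.dual_tail f (|F f - f v| / (2 * K)) (by positivity)
  set f' := ∑ i ∈ s, (f.comp (HS.sg i)).comp (HS.proj i) with hf'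
  have e1 : F f' = f' v := by
    simp only [hf', map_sum, hy, sum_apply]
    rfl
  have e2 : F f - f v = F (f - f') - (f - f') v := by
    rw [map_sub, ContinuousLinearMap.sub_apply, e1]; ring
  have e3 : |F f - f v| ≤ ‖F‖ * ‖f - f'‖ + ‖f - f'‖ * ‖v‖ := by
    rw [e2]
    exact (abs_sub _ _).trans (add_le_add (F.le_opNorm _) ((f-f').le_opNorm _))
  have e4 : ‖F‖ * ‖f - f'‖ + ‖f - f'‖ * ‖v‖ ≤ K * (|F f - f v| / (2 * K)) := by
    calc _ = (‖F‖ + ‖v‖) * ‖f - f'‖ := by ring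
      _ ≤ K * (|F f - f v| / (2 * K)) := by
        apply mul_le_mul _ hs (norm_nonneg _) hKpos.le
        rw [hK]; linarith
  have e5 : K * (|F f - f v| / (2 * K)) = |F f - f v| / 2 := by field_simp
  linarith

end HS
end FSU

open Set Filter Topology
namespace FSU

/-! ### Convex functions -/

set_option linter.unusedSectionVars false

section cvx
variable {Y Y' : Type} [NormedAddCommGroup Y] [NormedSpace ℝ Y]
  [NormedAddCommGroup Y'] [NormedSpace ℝ Y']

def Cvx (G : Y → ℝ) : Prop := ∀ x y : Y, ∀ a b : ℝ, 0 ≤ a → 0 ≤ b → a + b = 1 →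
  G (a • x + b • y) ≤ a * G x + b * G y

def SecDiff (G : Y → ℝ) (x : Y) : Prop := ∀ ε : ℝ, 0 < ε → ∃ δ : ℝ, 0 < δ ∧
  ∀ h : Y, ‖h‖ < δ → G (x + h) + G (x - h) - 2 * G x ≤ ε * ‖h‖

theorem Cvx.convexOn {G : Y → ℝ} (h : Cvx G) : ConvexOn ℝ univ G :=
  ⟨convex_univ, fun x _ y _ a b ha hb hab => by simpa using h x y a b ha hb hab⟩

theorem Cvx.mid {G : Y → ℝ} (h : Cvx G) (x y : Y) :
    2 * G ((1 / 2 : ℝ) • (x + y)) ≤ G x + G y := by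
  have := h x y (1/2) (1/2) (by norm_num) (by norm_num) (by norm_num)
  rw [smul_add]; linarith

theorem Cvx.sec {G : Y → ℝ} (h : Cvx G) (x y : Y) :
    0 ≤ G (x + y) + G (x - y) - 2 * G x := by
  have := h.mid (x + y) (x - y)
  have e : (1 / 2 : ℝ) • (x + y + (x - y)) = x := by
    rw [show x + y + (x - y) = (2:ℝ) • x by rw [two_smul]; abel, smul_smul]; norm_num
  rw [e] at this; linarith

theorem Cvx.add {G G' : Y → ℝ} (h : Cvx G) (h' : Cvx G') : Cvx (fun x => G x + G' x) := by
  intro x y a b ha hb hab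
  have := h x y a b ha hb hab
  have := h' x y a b ha hb hab
  nlinarith

theorem Cvx.mul_const {G : Y → ℝ} (h : Cvx G) {c : ℝ} (hc : 0 ≤ c) : Cvx (fun x => c * G x) := by
  intro x y a b ha hb hab
  have := h x y a b ha hb hab
  have := mul_le_mul_of_nonneg_left this hc
  dsimp only
  linarith

theorem Cvx.comp {G : Y → ℝ} (h : Cvx G) (T : Y' →L[ℝ] Y) : Cvx (fun x => G (T x)) := by
  intro x y a b ha hb hab
  have := h (T x) (T y) a b ha hb hab
  simpa using this

theorem Cvx.finsum {ι : Type} {G : ι → Y → ℝ} (A : Finset ι) (h : ∀ i, Cvx (G i)) :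
    Cvx (fun x => ∑ i ∈ A, G i x) := by
  intro x y a b ha hb hab
  dsimp only
  rw [Finset.mul_sum, Finset.mul_sum, ← Finset.sum_add_distrib]
  exact Finset.sum_le_sum fun i _ => h i x y a b ha hb hab

theorem real_sq_combo (s t a b : ℝ) (ha : 0 ≤ a) (hb : 0 ≤ b) (hab : a + b = 1) :
    (a * s + b * t) ^ 2 ≤ a * s ^ 2 + b * t ^ 2 := by
  obtain rfl : b = 1 - a := by linarith
  have : 0 ≤ a * (1 - a) * (s - t) ^ 2 := by positivity
  nlinarith

theorem cvx_norm_sq : Cvx (fun x : Y => ‖x‖ ^ 2) := by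
  intro x y a b ha hb hab
  have h1 : ‖a • x + b • y‖ ≤ a * ‖x‖ + b * ‖y‖ := by
    refine (norm_add_le _ _).trans ?_
    rw [norm_smul, norm_smul, Real.norm_of_nonneg ha, Real.norm_of_nonneg hb]
  calc ‖a • x + b • y‖ ^ 2 ≤ (a * ‖x‖ + b * ‖y‖) ^ 2 := by gcongr
    _ ≤ _ := real_sq_combo _ _ _ _ ha hb hab

theorem norm_sq_sec (x h : Y) :
    ‖x + h‖ ^ 2 + ‖x - h‖ ^ 2 - 2 * ‖x‖ ^ 2 ≤ 4 * ‖x‖ * ‖h‖ + 2 * ‖h‖ ^ 2 := by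
  have h1 := norm_add_le x h
  have h2 := norm_sub_le x h
  have h3 : ‖x + h‖ ^ 2 ≤ (‖x‖ + ‖h‖) ^ 2 := by gcongr
  have h4 : ‖x - h‖ ^ 2 ≤ (‖x‖ + ‖h‖) ^ 2 := by gcongr
  nlinarith

theorem Cvx.continuous {G : Y → ℝ} (h : Cvx G) {C : ℝ} (hC : ∀ x, G x ≤ C * ‖x‖ ^ 2) :
    Continuous G := by
  rw [← continuousOn_univ]
  have := (h.convexOn.continuousOn_tfae isOpen_univ univ_nonempty).out 1 3
  rw [this]
  refine ⟨0, mem_univ _, ?_⟩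
  refine ⟨|C|, ?_⟩
  rw [eventually_map]
  filter_upwards [Metric.ball_mem_nhds (0 : Y) one_pos] with x hx
  have hx : ‖x‖ < 1 := by simpa using hx
  calc G x ≤ C * ‖x‖ ^ 2 := hC x
    _ ≤ |C| * ‖x‖ ^ 2 := by gcongr; exact le_abs_self _
    _ ≤ |C| * 1 := by gcongr; nlinarith [norm_nonneg x]
    _ = |C| := mul_one _

theorem Cvx.exists_subgrad {G : Y → ℝ} (h : Cvx G) (hc : Continuous G) (x : Y) :
    ∃ D : StrongDual ℝ Y, ∀ y, G x + D (y - x) ≤ G y := by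
  have hconv : Convex ℝ {p : Y × ℝ | G p.1 < p.2} := by
    intro p hp q hq a b ha hb hab
    simp only [mem_ofPred_eq] at hp hq ⊢
    have := h p.1 q.1 a b ha hb hab
    simp only [Prod.fst_add, Prod.smul_fst, Prod.snd_add, Prod.smul_snd, smul_eq_mul]
    rcases ha.eq_or_lt with rfl | ha'
    · obtain rfl : b = 1 := by linarith
      linarith
    · nlinarith [mul_lt_mul_of_pos_left hp ha', mul_le_mul_of_nonneg_left hq.le hb]
  have hopen : IsOpen {p : Y × ℝ | G p.1 < p.2} :=
    isOpen_lt (hc.comp continuous_fst) continuous_snd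
  obtain ⟨f, hf⟩ := geometric_hahn_banach_open_point hconv hopen
    (show (x, G x) ∉ {p : Y × ℝ | G p.1 < p.2} by simp)
  have hdec : ∀ (y : Y) (t : ℝ), f (y, t) = f (y, 0) + t * f (0, 1) := by
    intro y t
    rw [← smul_eq_mul, ← map_smul, ← map_add]; simp
  have hs : f (0, 1) < 0 := by
    have := hf (x, G x + 1) (by simp)
    rw [hdec, hdec x (G x)] at this
    linarith
  set s := f (0, 1)
  set g : StrongDual ℝ Y := f.comp (ContinuousLinearMap.inl ℝ Y ℝ) with hg
  have hgx : ∀ y, f (y, 0) = g y := fun y => rfl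
  refine ⟨(-1 / s) • g, fun y => ?_⟩
  have hle : g y + G y * s ≤ g x + G x * s := by
    by_contra! hlt
    set d := (g y + G y * s - (g x + G x * s)) / (-s) with hd
    have hdpos : 0 < d := div_pos (by linarith) (by linarith)
    have := hf (y, G y + d) (by simpa using hdpos)
    rw [hdec, hdec x (G x), hgx, hgx] at this
    have hds : d * s = -(g y + G y * s - (g x + G x * s)) := by
      have : s ≠ 0 := hs.ne
      rw [hd, div_neg, neg_mul, div_mul_cancel₀ _ this]
    have h3 : (G y + d) * s = G y * s + d * s := by ring
    rw [h3, hds] at this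
    linarith
  have : ((-1 / s) • g) (y - x) = (g x - g y) / s := by
    simp only [map_sub, smul_apply, smul_eq_mul]; field_simp; ring
  rw [this]
  have : (g x - g y) / s ≤ G y - G x := by
    rw [div_le_iff_of_neg hs]; linarith
  linarith

theorem Cvx.hasFDerivAt {G : Y → ℝ} {x : Y} (hs : SecDiff G x) {D : StrongDual ℝ Y}
    (hD : ∀ y, G x + D (y - x) ≤ G y) : HasFDerivAt G D x := by
  rw [hasFDerivAt_iff_isLittleO_nhds_zero, Asymptotics.isLittleO_iff]
  intro ε hε
  obtain ⟨δ, hδ, H⟩ := hs ε hε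
  filter_upwards [Metric.ball_mem_nhds (0 : Y) hδ] with h hh
  have h1 := H h (by simpa using hh)
  have h2 := hD (x + h)
  have h3 := hD (x - h)
  rw [add_sub_cancel_left] at h2
  rw [show x - h - x = -h by abel, map_neg] at h3
  rw [Real.norm_eq_abs, abs_of_nonneg (by linarith)]
  linarith

theorem Refl.exists_min (hR : Refl Y) {G : Y → ℝ} (h : Cvx G) (hc : Continuous G)
    (h0 : ∀ y, 0 ≤ G y) (hco : ∀ r, ∃ R, ∀ y, G y ≤ r → ‖y‖ ≤ R) :
    ∃ m, ∀ y, G m ≤ G y := by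
  set I := sInf (range G)
  have hb : BddBelow (range G) := ⟨0, by rintro _ ⟨y, rfl⟩; exact h0 y⟩
  have hI : ∀ y, I ≤ G y := fun y => csInf_le hb ⟨y, rfl⟩
  have hu : ∀ n : ℕ, ∃ u, G u < I + 1 / (n + 1) := by
    intro n
    obtain ⟨_, ⟨u, rfl⟩, hu⟩ := Real.lt_sInf_add_pos (range_nonempty G) (Nat.one_div_pos_of_nat (α := ℝ) (n := n))
    exact ⟨u, hu⟩
  choose u hu using hu
  obtain ⟨R, hR'⟩ := hco (I + 1)
  have hub : ∀ n, ‖u n‖ ≤ R := fun n => hR' _ ((hu n).le.trans (by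
    have : (1:ℝ) / (n + 1) ≤ 1 := by
      rw [div_le_one (by positivity)]; linarith [n.cast_nonneg (α := ℝ)]
    linarith))
  obtain ⟨m, hm⟩ := hR.exists_weak_limit (hyperfilter ℕ) u R hub
  obtain ⟨D, hD⟩ := h.exists_subgrad hc m
  refine ⟨m, fun y => le_trans ?_ (hI y)⟩
  have t1 : Tendsto (fun n => G m + (D (u n) - D m)) (hyperfilter ℕ) (𝓝 (G m + (D m - D m))) :=
    ((hm D).sub_const _).const_add _
  have t2 : Tendsto (fun n : ℕ => I + 1 / ((n:ℝ) + 1)) (hyperfilter ℕ) (𝓝 (I + 0)) :=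
    ((tendsto_one_div_add_atTop_nhds_zero_nat (𝕜 := ℝ)).const_add I).mono_left
      (Nat.hyperfilter_le_atTop)
  have := le_of_tendsto_of_tendsto' t1 t2 (fun n => by
    have h1 := hD (u n)
    rw [map_sub] at h1
    exact h1.trans (hu n).le)
  linarith

/-! ### Smoothness -/

def HasSm (Y : Type) [NormedAddCommGroup Y] [NormedSpace ℝ Y] : Prop :=
  ∃ N : Y → ℝ, Cvx N ∧ (∀ x, N (-x) = N x) ∧ (∀ x, ‖x‖ ^ 2 / 2 ≤ N x) ∧ (∀ x, N x ≤ ‖x‖ ^ 2) ∧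
    (∀ x h, N (x + h) + N (x - h) - 2 * N x ≤ 4 * ‖x‖ * ‖h‖ + 2 * ‖h‖ ^ 2) ∧ ∀ x, SecDiff N x

def HasSmW (Y : Type) [NormedAddCommGroup Y] [NormedSpace ℝ Y] : Prop :=
  ∃ (S : Y → ℝ) (c C : ℝ), 0 < c ∧ Cvx S ∧ (∀ x, S (-x) = S x) ∧ (∀ x, c * ‖x‖ ^ 2 ≤ S x) ∧
    (∀ x, S x ≤ C * ‖x‖ ^ 2) ∧ ∀ x, SecDiff S x

theorem HasSmW.hasSm (h : HasSmW Y) (hR : Refl Y) : HasSm Y := by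
  obtain ⟨S, c, C, hc, hS, hev, hlo, hup, hsd⟩ := h
  have hScont := hS.continuous hup
  have hK : ∀ y, ‖y‖ ^ 2 ≤ c⁻¹ * S y := fun y => by
    rw [inv_mul_eq_div, le_div_iff₀ hc]; linarith [hlo y]
  have hmin : ∀ x : Y, ∃ m, ∀ y, ‖x - m‖ ^ 2 + c⁻¹ * S m ≤ ‖x - y‖ ^ 2 + c⁻¹ * S y := by
    intro x
    apply hR.exists_min (G := fun y => ‖x - y‖ ^ 2 + c⁻¹ * S y)
    · apply Cvx.add _ (hS.mul_const (inv_nonneg.2 hc.le))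
      intro y z a b ha hb hab
      have := cvx_norm_sq (x - y) (x - z) a b ha hb hab
      convert this using 3
      rw [smul_sub, smul_sub, show a • x - a • y + (b • x - b • z)
        = (a + b) • x - (a • y + b • z) by rw [add_smul]; abel, hab, one_smul]
    · fun_prop
    · intro y
      have := hK y
      have := sq_nonneg ‖y‖
      have := sq_nonneg ‖x - y‖
      linarith
    · intro r
      refine ⟨r + 1, fun y hy => ?_⟩
      have := hK y
      have := sq_nonneg ‖x - y‖
      nlinarith [sq_nonneg (‖y‖ - 1), norm_nonneg y]
  choose m hm using hmin
  have hS0 : S 0 ≤ 0 := by simpa using hup 0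
  have hN2 : ∀ x, ‖x - m x‖ ^ 2 + c⁻¹ * S (m x) ≤ ‖x‖ ^ 2 := fun x => by
    have := hm x 0
    rw [sub_zero] at this
    have := mul_nonpos_of_nonneg_of_nonpos (inv_nonneg.2 hc.le) hS0
    linarith
  have hevle : ∀ x, ‖-x - m (-x)‖ ^ 2 + c⁻¹ * S (m (-x)) ≤ ‖x - m x‖ ^ 2 + c⁻¹ * S (m x) := by
    intro x
    have := hm (-x) (-m x)
    rwa [hev, show -x - -m x = -(x - m x) by abel, norm_neg] at this
  refine ⟨fun x => ‖x - m x‖ ^ 2 + c⁻¹ * S (m x), ?_, ?_, ?_, ?_, ?_, ?_⟩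
  · intro x y a b ha hb hab
    dsimp only
    refine (hm _ (a • m x + b • m y)).trans ?_
    have h1 := cvx_norm_sq (x - m x) (y - m y) a b ha hb hab
    have h2 := mul_le_mul_of_nonneg_left (hS (m x) (m y) a b ha hb hab) (inv_nonneg.2 hc.le)
    rw [show a • x + b • y - (a • m x + b • m y) = a • (x - m x) + b • (y - m y) by
      rw [smul_sub, smul_sub]; abel]
    dsimp only at h1
    linarith
  · intro x
    refine le_antisymm (hevle x) ?_
    have := hevle (-x)
    rwa [neg_neg] at this
  · intro x
    have h1 := hK (m x)
    have h2 : ‖x‖ ≤ ‖x - m x‖ + ‖m x‖ := by simpa using norm_add_le (x - m x) (m x)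
    have h3 : ‖x‖ ^ 2 ≤ (‖x - m x‖ + ‖m x‖) ^ 2 := by gcongr
    dsimp only
    nlinarith [sq_nonneg (‖x - m x‖ - ‖m x‖)]
  · exact hN2
  · intro x h
    have h1 := hm (x + h) (m x)
    have h2 := hm (x - h) (m x)
    have h3 := norm_sq_sec (x - m x) h
    rw [show x - m x + h = x + h - m x by abel, show x - m x - h = x - h - m x by abel] at h3
    have h4 : ‖x - m x‖ ≤ ‖x‖ := by
      have := hN2 x
      have := hK (m x)
      have := sq_nonneg ‖m x‖
      exact abs_le_of_sq_le_sq' (by linarith) (norm_nonneg x) |>.2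
    have h5 : 4 * ‖x - m x‖ * ‖h‖ ≤ 4 * ‖x‖ * ‖h‖ := by gcongr
    dsimp only
    linarith
  · intro x ε hε
    obtain ⟨δ, hδ, H⟩ := hsd (m x) (ε * c) (by positivity)
    refine ⟨δ, hδ, fun h hh => ?_⟩
    have h0 := H h hh
    have h1 := hm (x + h) (m x + h)
    have h2 := hm (x - h) (m x - h)
    rw [show x + h - (m x + h) = x - m x by abel] at h1
    rw [show x - h - (m x - h) = x - m x by abel] at h2
    have h3 := mul_le_mul_of_nonneg_left h0 (inv_nonneg.2 hc.le)
    rw [show c⁻¹ * (ε * c * ‖h‖) = ε * ‖h‖ by field_simp] at h3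
    dsimp only
    linarith

theorem HasSmW.congr (h : HasSmW Y) (e : Y ≃L[ℝ] Y') : HasSmW Y' := by
  obtain ⟨S, c, C, hc, hS, hev, hlo, hup, hsd⟩ := h
  set K := ‖(e : Y →L[ℝ] Y')‖ + 1 with hKd
  have hK : 0 < K := by positivity
  set K' := ‖(e.symm : Y' →L[ℝ] Y)‖ + 1 with hKd'
  have hK' : 0 < K' := by positivity
  have e1 : ∀ y, ‖y‖ ≤ K * ‖e.symm y‖ := fun y => by
    have := (e : Y →L[ℝ] Y').le_opNorm (e.symm y)
    simp only [ContinuousLinearEquiv.coe_coe, ContinuousLinearEquiv.apply_symm_apply] at this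
    rw [hKd]; nlinarith [norm_nonneg (e.symm y)]
  have e2 : ∀ y, ‖e.symm y‖ ≤ K' * ‖y‖ := fun y => by
    have := (e.symm : Y' →L[ℝ] Y).le_opNorm y
    simp only [ContinuousLinearEquiv.coe_coe] at this
    rw [hKd']; nlinarith [norm_nonneg y]
  refine ⟨fun y => S (e.symm y), c / K ^ 2, |C| * K' ^ 2, by positivity,
    hS.comp (e.symm : Y' →L[ℝ] Y), fun y => by simp [hev], fun y => ?_, fun y => ?_, fun y => ?_⟩
  · refine le_trans ?_ (hlo _)
    rw [div_mul_eq_mul_div, div_le_iff₀ (by positivity)]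
    calc c * ‖y‖ ^ 2 ≤ c * (K * ‖e.symm y‖) ^ 2 := by gcongr; exact e1 y
      _ = _ := by ring
  · refine (hup _).trans ?_
    calc C * ‖e.symm y‖ ^ 2 ≤ |C| * (K' * ‖y‖) ^ 2 := by
          gcongr
          · exact le_abs_self _
          · exact e2 y
      _ = _ := by ring
  · intro ε hε
    obtain ⟨δ, hδ, H⟩ := hsd (e.symm y) (ε / K') (by positivity)
    refine ⟨δ / K', by positivity, fun h hh => ?_⟩
    rw [lt_div_iff₀ hK'] at hh
    have := H (e.symm h) (lt_of_le_of_lt (e2 h) (by linarith))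
    rw [← map_add, ← map_sub] at this
    refine this.trans ?_
    calc ε / K' * ‖e.symm h‖ ≤ ε / K' * (K' * ‖h‖) := by gcongr; exact e2 h
      _ = ε * ‖h‖ := by field_simp

/-! ### Local uniform rotundity -/

def HasLUR (Y : Type) [NormedAddCommGroup Y] [NormedSpace ℝ Y] : Prop :=
  ∃ Λ : Y → ℝ, Cvx Λ ∧ (∀ x, Λ (-x) = Λ x) ∧ (∀ x, 0 ≤ Λ x) ∧ (∀ x, Λ x ≤ ‖x‖ ^ 2) ∧
    ∀ (x : Y) (u : ℕ → Y), Tendsto (fun n => Λ (u n) + Λ x - 2 * Λ ((1 / 2 : ℝ) • (u n + x)))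
      atTop (𝓝 0) → Tendsto u atTop (𝓝 x)

theorem hasLUR_of_weak (e : Y ≃L[ℝ] Y') (Λ : Y → ℝ) (C : ℝ) (h1 : Cvx Λ)
    (h2 : ∀ x, Λ (-x) = Λ x) (h3 : ∀ x, 0 ≤ Λ x) (h4 : ∀ x, Λ x ≤ C * ‖x‖ ^ 2)
    (h5 : ∀ (x : Y) (u : ℕ → Y), Tendsto (fun n => Λ (u n) + Λ x - 2 * Λ ((1 / 2 : ℝ) • (u n + x)))
      atTop (𝓝 0) → Tendsto u atTop (𝓝 x)) : HasLUR Y' := by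
  set K := ‖(e.symm : Y' →L[ℝ] Y)‖ + 1 with hKd
  have hK : 0 < K := by positivity
  have e2 : ∀ y, ‖e.symm y‖ ≤ K * ‖y‖ := fun y => by
    have := (e.symm : Y' →L[ℝ] Y).le_opNorm y
    simp only [ContinuousLinearEquiv.coe_coe] at this
    rw [hKd]; nlinarith [norm_nonneg y]
  set M := (|C| + 1) * K ^ 2 with hM
  have hMpos : 0 < M := by positivity
  refine ⟨fun y => M⁻¹ * Λ (e.symm y), (h1.comp (e.symm : Y' →L[ℝ] Y)).mul_const (by positivity),
    fun y => by simp [h2], fun y => mul_nonneg (by positivity) (h3 _), fun y => ?_,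
    fun x u hu => ?_⟩
  · dsimp only
    rw [inv_mul_eq_div, div_le_iff₀ hMpos]
    calc Λ (e.symm y) ≤ C * ‖e.symm y‖ ^ 2 := h4 _
      _ ≤ (|C| + 1) * (K * ‖y‖) ^ 2 := by
          gcongr
          · linarith [le_abs_self C]
          · exact e2 y
      _ = _ := by rw [hM]; ring
  · have := h5 (e.symm x) (fun n => e.symm (u n)) (by
      have := hu.const_mul M
      rw [mul_zero] at this
      refine this.congr fun n => ?_
      dsimp only
      rw [map_smul, map_add]
      field_simp)
    have := (e.continuous.tendsto _).comp this
    simpa [Function.comp_def] using this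

end cvx
end FSU

open Set Filter Topology
namespace FSU

/-! ### Products and Hilbert sums -/

set_option linter.unusedSectionVars false

section prods
variable {Y Y' : Type} [NormedAddCommGroup Y] [NormedSpace ℝ Y]
  [NormedAddCommGroup Y'] [NormedSpace ℝ Y']

theorem SecDiff.add {G G' : Y → ℝ} {x : Y} (h : SecDiff G x) (h' : SecDiff G' x) :
    SecDiff (fun x => G x + G' x) x := by
  intro ε hε
  obtain ⟨δ, hδ, H⟩ := h (ε / 2) (by positivity)
  obtain ⟨δ', hδ', H'⟩ := h' (ε / 2) (by positivity)
  refine ⟨min δ δ', lt_min hδ hδ', fun k hk => ?_⟩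
  have h1 := H k (hk.trans_le (min_le_left _ _))
  have h2 := H' k (hk.trans_le (min_le_right _ _))
  dsimp only
  linarith

theorem SecDiff.mul_const {G : Y → ℝ} {x : Y} (h : SecDiff G x) {c : ℝ} (hc : 0 < c) :
    SecDiff (fun x => c * G x) x := by
  intro ε hε
  obtain ⟨δ, hδ, H⟩ := h (ε / c) (by positivity)
  refine ⟨δ, hδ, fun k hk => ?_⟩
  have h1 := mul_le_mul_of_nonneg_left (H k hk) hc.le
  rw [show c * (ε / c * ‖k‖) = ε * ‖k‖ by field_simp] at h1
  dsimp only
  linarith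

theorem SecDiff.comp {G : Y → ℝ} (T : Y' →L[ℝ] Y) {x : Y'} (h : SecDiff G (T x)) :
    SecDiff (fun x => G (T x)) x := by
  intro ε hε
  set K := ‖T‖ + 1 with hK
  have hKpos : 0 < K := by positivity
  have hT : ∀ y, ‖T y‖ ≤ K * ‖y‖ := fun y => by
    have := T.le_opNorm y
    rw [hK]; nlinarith [norm_nonneg y]
  obtain ⟨δ, hδ, H⟩ := h (ε / K) (by positivity)
  refine ⟨δ / K, by positivity, fun k hk => ?_⟩
  rw [lt_div_iff₀ hKpos] at hk
  have := H (T k) (lt_of_le_of_lt (hT k) (by linarith))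
  rw [← map_add, ← map_sub] at this
  refine this.trans ?_
  calc ε / K * ‖T k‖ ≤ ε / K * (K * ‖k‖) := by gcongr; exact hT k
    _ = ε * ‖k‖ := by field_simp

theorem SecDiff.finsum {ι : Type} {G : ι → Y → ℝ} {x : Y} (A : Finset ι)
    (h : ∀ i ∈ A, SecDiff (G i) x) : SecDiff (fun x => ∑ i ∈ A, G i x) x := by
  classical
  induction A using Finset.induction_on with
  | empty => intro ε hε; exact ⟨1, one_pos, fun k _ => by simp; positivity⟩
  | insert i A hi ih =>
    have := (h i (by simp)).add (ih (fun j hj => h j (by simp [hj])))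
    simpa [Finset.sum_insert hi] using this

theorem secDiff_sq (t : ℝ) : SecDiff (fun t : ℝ => t ^ 2) t := by
  intro ε hε
  refine ⟨ε / 2, by positivity, fun k hk => ?_⟩
  have : (t + k) ^ 2 + (t - k) ^ 2 - 2 * t ^ 2 = 2 * ‖k‖ * ‖k‖ := by
    have := sq_abs k
    rw [Real.norm_eq_abs]; nlinarith
  rw [this]
  gcongr
  linarith

theorem cvx_sq : Cvx (fun t : ℝ => t ^ 2) := fun s t a b ha hb hab => by
  simpa using real_sq_combo s t a b ha hb hab

variable {ι : Type} [DecidableEq ι] {Z : ι → Type} [∀ i, NormedAddCommGroup (Z i)]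
  [∀ i, NormedSpace ℝ (Z i)]

/-- sums of convex functions over a Hilbert sum -/
theorem HS.exists_sum (N : ∀ i, Z i → ℝ) (h0 : ∀ i x, 0 ≤ N i x) (h1 : ∀ i x, N i x ≤ ‖x‖ ^ 2) :
    ∃ T : HS Z → ℝ, ∀ y, HasSum (fun i => N i (y i)) (T y) := by
  refine ⟨fun y => ∑' i, N i (y i), fun y => Summable.hasSum ?_⟩
  exact Summable.of_nonneg_of_le (fun i => h0 i _) (fun i => h1 i _) (HS.hasSum_sq y).summable

theorem HS.cvx_sum {N : ∀ i, Z i → ℝ} {T : HS Z → ℝ}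
    (hT : ∀ y, HasSum (fun i => N i (y i)) (T y)) (hN : ∀ i, Cvx (N i)) : Cvx T := by
  intro x y a b ha hb hab
  refine hasSum_le (fun i => ?_) (hT _) (((hT x).mul_left a).add ((hT y).mul_left b))
  exact hN i (x i) (y i) a b ha hb hab

theorem HS.tail (y : HS Z) (ε : ℝ) (hε : 0 < ε) :
    ∃ A : Finset ι, ‖y - ∑ i ∈ A, HS.sg i (y i)‖ < ε := by
  have := HS.hasSum_sg y
  have h2 := (Metric.tendsto_atTop.1 this) ε hε
  obtain ⟨A, hA⟩ := h2
  have := hA A le_rfl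
  rw [dist_comm, dist_eq_norm] at this
  exact ⟨A, this⟩

theorem HS.tail_apply (y : HS Z) (A : Finset ι) {i : ι} (hi : i ∉ A) :
    (y - ∑ j ∈ A, HS.sg j (y j) : HS Z) i = y i := by
  have h1 : ∀ w : HS Z, w i = HS.proj i w := fun w => rfl
  rw [h1, map_sub, map_sum, Finset.sum_eq_zero, sub_zero]
  · rfl
  · intro j hj
    rw [HS.proj_apply, HS.sg_ne _ (by rintro rfl; exact hi hj)]

theorem HS.secDiff_sum {N : ∀ i, Z i → ℝ} {T : HS Z → ℝ}
    (hT : ∀ y, HasSum (fun i => N i (y i)) (T y))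
    (hq : ∀ i x h, N i (x + h) + N i (x - h) - 2 * N i x ≤ 4 * ‖x‖ * ‖h‖ + 2 * ‖h‖ ^ 2)
    (hs : ∀ i x, SecDiff (N i) x) (y : HS Z) : SecDiff T y := by
  intro ε hε
  obtain ⟨A, hA⟩ := HS.tail y (ε / 16) (by positivity)
  set y' := y - ∑ j ∈ A, HS.sg j (y j) with hy'
  have hc : ∀ i, ∃ δ : ℝ, 0 < δ ∧ ∀ h : Z i, ‖h‖ < δ →
      N i (y i + h) + N i (y i - h) - 2 * N i (y i) ≤ ε / (4 * (A.card + 1)) * ‖h‖ :=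
    fun i => hs i (y i) _ (by positivity)
  choose δ hδ H using hc
  obtain ⟨d, hd, hdA⟩ : ∃ d : ℝ, 0 < d ∧ ∀ i ∈ A, d ≤ δ i := by
    clear hA hy' H y'
    induction A using Finset.induction_on with
    | empty => exact ⟨1, one_pos, by simp⟩
    | insert i A hi ih =>
      obtain ⟨d, hd, hdA⟩ := ih
      refine ⟨min (δ i) d, lt_min (hδ i) hd, fun j hj => ?_⟩
      rcases Finset.mem_insert.1 hj with rfl | hj
      · exact min_le_left _ _
      · exact (min_le_right _ _).trans (hdA j hj)
  refine ⟨min d (ε / 16), lt_min hd (by positivity), fun h hh => ?_⟩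
  rcases eq_or_ne h 0 with rfl | hne
  · simp; linarith
  have hpos : 0 < ‖h‖ := norm_pos_iff.2 hne
  have hh1 : ‖h‖ < d := hh.trans_le (min_le_left _ _)
  have hh2 : ‖h‖ < ε / 16 := hh.trans_le (min_le_right _ _)
  set t := ‖h‖ / (ε / 16) with ht
  have htpos : 0 < t := by positivity
  have hL : HasSum (fun i => N i ((y + h : HS Z) i) + N i ((y - h : HS Z) i) - 2 * N i (y i))
      (T (y + h) + T (y - h) - 2 * T y) :=
    ((hT (y + h)).add (hT (y - h))).sub ((hT y).mul_left 2)
  have hR1 : HasSum (fun i => if i ∈ A then ε / (4 * (A.card + 1)) * ‖h‖ else 0)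
      (∑ i ∈ A, (if i ∈ A then ε / (4 * (A.card + 1)) * ‖h‖ else 0)) :=
    hasSum_sum_of_ne_finset_zero (fun i hi => by simp [hi])
  have hR2 : HasSum (fun i => 2 * (t * ‖y' i‖ ^ 2 + t⁻¹ * ‖h i‖ ^ 2) + 2 * ‖h i‖ ^ 2)
      (2 * (t * ‖y'‖ ^ 2 + t⁻¹ * ‖h‖ ^ 2) + 2 * ‖h‖ ^ 2) :=
    ((((HS.hasSum_sq y').mul_left t).add ((HS.hasSum_sq h).mul_left t⁻¹)).mul_left 2).add
      ((HS.hasSum_sq h).mul_left 2)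
  have key := hasSum_le (fun i => ?_) hL (hR1.add hR2)
  · refine key.trans ?_
    have s1 : (∑ i ∈ A, (if i ∈ A then ε / (4 * (A.card + 1)) * ‖h‖ else 0)) ≤ ε / 4 * ‖h‖ := by
      rw [Finset.sum_congr rfl (fun i hi => if_pos hi), Finset.sum_const, nsmul_eq_mul]
      have : (A.card : ℝ) * (ε / (4 * (A.card + 1))) ≤ ε / 4 := by
        rw [mul_div_assoc', div_le_div_iff₀ (by positivity) (by norm_num)]
        nlinarith
      rw [← mul_assoc]
      gcongr
    have s2 : t * ‖y'‖ ^ 2 ≤ ε / 16 * ‖h‖ := by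
      calc t * ‖y'‖ ^ 2 ≤ t * (ε / 16) ^ 2 := by gcongr
        _ = _ := by rw [ht]; field_simp
    have s3 : t⁻¹ * ‖h‖ ^ 2 = ε / 16 * ‖h‖ := by
      rw [ht]; field_simp
    have s4 : ‖h‖ ^ 2 ≤ ε / 16 * ‖h‖ := by nlinarith
    have s5 : 0 ≤ ε * ‖h‖ := by positivity
    linarith
  · have e1 : (y + h : HS Z) i = y i + h i := rfl
    have e2 : (y - h : HS Z) i = y i - h i := rfl
    rw [e1, e2]
    by_cases hi : i ∈ A
    · have h1 := H i (h i) (((HS.norm_apply_le h i).trans_lt hh1).trans_le (hdA i hi))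
      have h2 : ε / (4 * (A.card + 1)) * ‖h i‖ ≤ ε / (4 * (A.card + 1)) * ‖h‖ := by
        gcongr; exact HS.norm_apply_le h i
      have h3 : 0 ≤ 2 * (t * ‖y' i‖ ^ 2 + t⁻¹ * ‖h i‖ ^ 2) + 2 * ‖h i‖ ^ 2 := by positivity
      simp only [hi, if_true]
      linarith
    · have h1 := hq i (y i) (h i)
      have h2 : y' i = y i := HS.tail_apply y A hi
      simp only [hi, if_false, zero_add, h2]
      have h3 : 2 * (‖y i‖ * ‖h i‖) ≤ t * ‖y i‖ ^ 2 + t⁻¹ * ‖h i‖ ^ 2 := by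
        have : 0 ≤ t⁻¹ * (t * ‖y i‖ - ‖h i‖) ^ 2 := by positivity
        have h4 : t⁻¹ * (t * ‖y i‖ - ‖h i‖) ^ 2 =
          t * ‖y i‖ ^ 2 + t⁻¹ * ‖h i‖ ^ 2 - 2 * (‖y i‖ * ‖h i‖) := by
          field_simp; ring
        linarith
      linarith

variable {F : Type} [NormedAddCommGroup F] [NormedSpace ℝ F] {κ : Type} [Fintype κ]

theorem sum_sq_ge (e : κ → StrongDual ℝ F)
    (hn : ∀ a (C : ℝ), 0 ≤ C → (∀ i, |e i a| ≤ C) → ‖a‖ ≤ C) (a : F) :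
    ‖a‖ ^ 2 ≤ ∑ i, (e i a) ^ 2 := by
  have h0 : 0 ≤ ∑ i, (e i a) ^ 2 := Finset.sum_nonneg fun i _ => sq_nonneg _
  have := hn a (Real.sqrt (∑ i, (e i a) ^ 2)) (Real.sqrt_nonneg _) (fun i => by
    apply Real.abs_le_sqrt
    exact Finset.single_le_sum (f := fun i => (e i a) ^ 2) (fun i _ => sq_nonneg _) (Finset.mem_univ i))
  calc ‖a‖ ^ 2 ≤ (Real.sqrt (∑ i, (e i a) ^ 2)) ^ 2 := by gcongr
    _ = _ := Real.sq_sqrt h0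

theorem sum_sq_le (e : κ → StrongDual ℝ F) (he : ∀ i a, |e i a| ≤ ‖a‖) (a : F) :
    ∑ i, (e i a) ^ 2 ≤ Fintype.card κ * ‖a‖ ^ 2 := by
  have : ∑ i, (e i a) ^ 2 ≤ ∑ i : κ, ‖a‖ ^ 2 := Finset.sum_le_sum fun i _ => by
    rw [← sq_abs]; gcongr; exact he i a
  simpa using this

theorem hasSmW_prod (e : κ → StrongDual ℝ F) (he : ∀ i a, |e i a| ≤ ‖a‖)
    (hn : ∀ a (C : ℝ), 0 ≤ C → (∀ i, |e i a| ≤ C) → ‖a‖ ≤ C) (h : ∀ i, HasSm (Z i)) :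
    HasSmW (F × HS Z) := by
  choose N h1 h2 h3 h4 h5 h6 using h
  have h0 : ∀ i x, 0 ≤ N i x := fun i x => le_trans (by positivity) (h3 i x)
  obtain ⟨T, hT⟩ := HS.exists_sum N h0 h4
  have hTup : ∀ y, T y ≤ ‖y‖ ^ 2 := fun y => hasSum_le (fun i => h4 i _) (hT y) (HS.hasSum_sq y)
  have hTlo : ∀ y, ‖y‖ ^ 2 / 2 ≤ T y := fun y =>
    hasSum_le (fun i => h3 i _) ((HS.hasSum_sq y).div_const 2) (hT y)
  refine ⟨fun p => (∑ i, (e i p.1) ^ 2) + T p.2, 1 / 2, Fintype.card κ + 1, by norm_num,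
    ?_, ?_, ?_, ?_, ?_⟩
  · refine Cvx.add (Cvx.finsum Finset.univ fun i => ?_) ?_
    · exact cvx_sq.comp ((e i).comp (ContinuousLinearMap.fst ℝ F (HS Z)))
    · exact (HS.cvx_sum hT h1).comp (ContinuousLinearMap.snd ℝ F (HS Z))
  · intro p
    have : T (-p.2) = T p.2 := by
      refine (hT (-p.2)).unique ?_
      convert hT p.2 using 2 with i
      exact h2 i (p.2 i)
    simp [this]
  · intro p
    have e1 := sum_sq_ge e hn p.1
    have e2 := hTlo p.2
    rw [Prod.norm_def]
    rcases max_cases ‖p.1‖ ‖p.2‖ with h | h <;> rw [h.1] <;>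
      nlinarith [sq_nonneg ‖p.1‖, sq_nonneg ‖p.2‖]
  · intro p
    have e1 := sum_sq_le e he p.1
    have e2 := hTup p.2
    have e3 : ‖p.1‖ ^ 2 ≤ ‖p‖ ^ 2 := by gcongr; exact norm_fst_le p
    have e4 : ‖p.2‖ ^ 2 ≤ ‖p‖ ^ 2 := by gcongr; exact norm_snd_le p
    have e5 := mul_le_mul_of_nonneg_left e3 (Nat.cast_nonneg (α := ℝ) (Fintype.card κ))
    dsimp only
    linarith
  · intro p
    refine SecDiff.add (SecDiff.finsum Finset.univ fun i _ => ?_) ?_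
    · exact SecDiff.comp (G := fun t : ℝ => t ^ 2)
        ((e i).comp (ContinuousLinearMap.fst ℝ F (HS Z))) (secDiff_sq _)
    · exact SecDiff.comp (G := T) (ContinuousLinearMap.snd ℝ F (HS Z))
        (HS.secDiff_sum hT h5 h6 _)

/-- Radon-Riesz property in Hilbert sums. -/
theorem HS.tendsto_of_norm {u : ℕ → HS Z} {y : HS Z}
    (h1 : ∀ i, Tendsto (fun n => u n i) atTop (𝓝 (y i)))
    (h2 : Tendsto (fun n => ‖u n‖) atTop (𝓝 ‖y‖)) : Tendsto u atTop (𝓝 y) := by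
  rw [tendsto_iff_norm_sub_tendsto_zero]
  rw [Metric.tendsto_atTop']
  intro ε hε
  obtain ⟨A, hA⟩ := HS.tail y (ε / 4) (by positivity)
  have ht : Tendsto (fun n => ‖u n - ∑ i ∈ A, HS.sg i (u n i)‖ ^ 2) atTop
      (𝓝 (‖y - ∑ i ∈ A, HS.sg i (y i)‖ ^ 2)) := by
    have e : ∀ w : HS Z, ‖w - ∑ i ∈ A, HS.sg i (w i)‖ ^ 2 = ‖w‖ ^ 2 - ∑ i ∈ A, ‖w i‖ ^ 2 :=
      fun w => HS.norm_compl w A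
    simp only [e]
    exact (h2.pow 2).sub (tendsto_finsetSum A fun i _ => (h1 i).norm.pow 2)
  have ev1 := ht.eventually (gt_mem_nhds (show _ < (ε / 4) ^ 2 by gcongr))
  have ht2 : Tendsto (fun n => ‖∑ i ∈ A, HS.sg i (u n i) - ∑ i ∈ A, HS.sg i (y i)‖) atTop (𝓝 0) := by
    rw [← tendsto_iff_norm_sub_tendsto_zero]
    exact tendsto_finsetSum A fun i _ => ((HS.sg i).continuous.tendsto _).comp (h1 i)
  have ev2 := ht2.eventually (gt_mem_nhds (show 0 < ε / 4 by positivity))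
  obtain ⟨M, hM⟩ := eventually_atTop.1 (ev1.and ev2)
  refine ⟨M, fun n hn => ?_⟩
  obtain ⟨a1, a2⟩ := hM n hn.le
  have a3 : ‖u n - ∑ i ∈ A, HS.sg i (u n i)‖ < ε / 4 := lt_of_pow_lt_pow_left₀ 2 (by positivity) a1
  rw [Real.dist_0_eq_abs, abs_of_nonneg (norm_nonneg _)]
  have : u n - y = (u n - ∑ i ∈ A, HS.sg i (u n i)) +
      (∑ i ∈ A, HS.sg i (u n i) - ∑ i ∈ A, HS.sg i (y i)) - (y - ∑ i ∈ A, HS.sg i (y i)) := by abel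
  rw [this]
  have := norm_sub_le ((u n - ∑ i ∈ A, HS.sg i (u n i)) +
      (∑ i ∈ A, HS.sg i (u n i) - ∑ i ∈ A, HS.sg i (y i))) (y - ∑ i ∈ A, HS.sg i (y i))
  have := norm_add_le (u n - ∑ i ∈ A, HS.sg i (u n i))
      (∑ i ∈ A, HS.sg i (u n i) - ∑ i ∈ A, HS.sg i (y i))
  linarith

theorem hasLUR_prod (e : κ → StrongDual ℝ F) (he : ∀ i a, |e i a| ≤ ‖a‖)
    (hn : ∀ a (C : ℝ), 0 ≤ C → (∀ i, |e i a| ≤ C) → ‖a‖ ≤ C) (h : ∀ i, HasLUR (Z i))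
    (eq : (F × HS Z) ≃L[ℝ] Y) : HasLUR Y := by
  choose N h1 h2 h3 h4 h5 using h
  obtain ⟨T, hT⟩ := HS.exists_sum N h3 h4
  have hTup : ∀ y, T y ≤ ‖y‖ ^ 2 := fun y => hasSum_le (fun i => h4 i _) (hT y) (HS.hasSum_sq y)
  have hTlo : ∀ y, 0 ≤ T y := fun y => (hT y).nonneg fun i => h3 i _
  have cT := HS.cvx_sum hT h1
  refine hasLUR_of_weak eq (fun p => (∑ i, (e i p.1) ^ 2) + (‖p.2‖ ^ 2 + T p.2))
    (Fintype.card κ + 2) ?_ ?_ ?_ ?_ ?_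
  · refine Cvx.add (Cvx.finsum Finset.univ fun i => ?_) (Cvx.add ?_ ?_)
    · exact cvx_sq.comp ((e i).comp (ContinuousLinearMap.fst ℝ F (HS Z)))
    · exact cvx_norm_sq.comp (ContinuousLinearMap.snd ℝ F (HS Z))
    · exact (HS.cvx_sum hT h1).comp (ContinuousLinearMap.snd ℝ F (HS Z))
  · intro p
    have : T (-p.2) = T p.2 := by
      refine (hT (-p.2)).unique ?_
      convert hT p.2 using 2 with i
      exact h2 i (p.2 i)
    simp [this]
  · intro p
    have := hTlo p.2
    positivity
  · intro p
    have e1 := sum_sq_le e he p.1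
    have e2 := hTup p.2
    have e3 : ‖p.1‖ ^ 2 ≤ ‖p‖ ^ 2 := by gcongr; exact norm_fst_le p
    have e4 : ‖p.2‖ ^ 2 ≤ ‖p‖ ^ 2 := by gcongr; exact norm_snd_le p
    have e5 := mul_le_mul_of_nonneg_left e3 (Nat.cast_nonneg (α := ℝ) (Fintype.card κ))
    linarith
  · intro p u hu
    -- the three defects
    have d1 : ∀ (i : κ) (n : ℕ), (e i ((u n).1 - p.1)) ^ 2 / 2 =
        (e i (u n).1) ^ 2 + (e i p.1) ^ 2 - 2 * (e i ((1 / 2 : ℝ) • (u n + p)).1) ^ 2 := by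
      intro i n
      simp only [Prod.smul_fst, Prod.fst_add, map_smul, map_add, map_sub, smul_eq_mul]
      ring
    have d2 : ∀ n, (‖(u n).2‖ - ‖p.2‖) ^ 2 / 2 ≤
        ‖(u n).2‖ ^ 2 + ‖p.2‖ ^ 2 - 2 * ‖((1 / 2 : ℝ) • (u n + p)).2‖ ^ 2 := by
      intro n
      have : ‖((1 / 2 : ℝ) • (u n + p)).2‖ ≤ (‖(u n).2‖ + ‖p.2‖) / 2 := by
        simp only [Prod.smul_snd, Prod.snd_add, norm_smul]
        have := norm_add_le (u n).2 p.2
        rw [Real.norm_of_nonneg (by norm_num)]; linarith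
      have : ‖((1 / 2 : ℝ) • (u n + p)).2‖ ^ 2 ≤ ((‖(u n).2‖ + ‖p.2‖) / 2) ^ 2 := by gcongr
      nlinarith
    have d3 : ∀ (i : ι) (n : ℕ),
        N i ((u n).2 i) + N i (p.2 i) - 2 * N i ((1 / 2 : ℝ) • ((u n).2 i + p.2 i)) ≤
        T (u n).2 + T p.2 - 2 * T ((1 / 2 : ℝ) • (u n + p)).2 := by
      intro i n
      have := le_hasSum (((hT (u n).2).add (hT p.2)).sub
        ((hT ((1 / 2 : ℝ) • (u n + p)).2).mul_left 2)) i (fun j _ => by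
          have := (h1 j).mid ((u n).2 j) (p.2 j)
          have e : (((1 / 2 : ℝ) • (u n + p)).2 : HS Z) j =
            (1 / 2 : ℝ) • ((u n).2 j + p.2 j) := rfl
          rw [e]; linarith)
      exact this
    have d3' : ∀ n, 0 ≤ T (u n).2 + T p.2 - 2 * T ((1 / 2 : ℝ) • (u n + p)).2 := fun n => by
      have := cT.mid (u n).2 p.2
      exact sub_nonneg.2 this
    have hsum : ∀ n, (∑ i, (e i ((u n).1 - p.1)) ^ 2 / 2) =
        (∑ i, (e i (u n).1) ^ 2) + (∑ i, (e i p.1) ^ 2) -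
          2 * (∑ i, (e i ((1 / 2 : ℝ) • (u n + p)).1) ^ 2) := by
      intro n
      rw [Finset.mul_sum, ← Finset.sum_add_distrib, ← Finset.sum_sub_distrib]
      exact Finset.sum_congr rfl fun i _ => d1 i n
    set D := fun n => (∑ i, (e i (u n).1) ^ 2 + (‖(u n).2‖ ^ 2 + T (u n).2)) +
      (∑ i, (e i p.1) ^ 2 + (‖p.2‖ ^ 2 + T p.2)) -
      2 * (∑ i, (e i ((1 / 2 : ℝ) • (u n + p)).1) ^ 2 + (‖((1 / 2 : ℝ) • (u n + p)).2‖ ^ 2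
        + T ((1 / 2 : ℝ) • (u n + p)).2)) with hD
    have hu : Tendsto D atTop (𝓝 0) := hu
    have n1 : ∀ n, 0 ≤ ∑ i, (e i ((u n).1 - p.1)) ^ 2 / 2 := fun n =>
      Finset.sum_nonneg fun i _ => by positivity
    have n2 : ∀ n, 0 ≤ (‖(u n).2‖ - ‖p.2‖) ^ 2 / 2 := fun n => by positivity
    have hDe : ∀ n, D n = (∑ i, (e i ((u n).1 - p.1)) ^ 2 / 2) +
        (‖(u n).2‖ ^ 2 + ‖p.2‖ ^ 2 - 2 * ‖((1 / 2 : ℝ) • (u n + p)).2‖ ^ 2) +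
        (T (u n).2 + T p.2 - 2 * T ((1 / 2 : ℝ) • (u n + p)).2) := by
      intro n; rw [hsum]; simp only [hD]; ring
    have t1 : Tendsto (fun n => (u n).1) atTop (𝓝 p.1) := by
      rw [tendsto_iff_norm_sub_tendsto_zero]
      have : Tendsto (fun n => ‖(u n).1 - p.1‖ ^ 2) atTop (𝓝 0) := by
        have hu2 := hu.const_mul 2
        rw [mul_zero] at hu2
        refine squeeze_zero (fun n => sq_nonneg _) (fun n => ?_) hu2
        have a1 := sum_sq_ge e hn ((u n).1 - p.1)
        have a2 := hDe n
        have a3 := d2 n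
        have a4 := d3' n
        have a5 := n2 n
        rw [← Finset.sum_div] at a2
        linarith
      have := this.sqrt
      simpa using this
    have t2 : Tendsto (fun n => ‖(u n).2‖) atTop (𝓝 ‖p.2‖) := by
      rw [tendsto_iff_norm_sub_tendsto_zero]
      have : Tendsto (fun n => (‖(u n).2‖ - ‖p.2‖) ^ 2) atTop (𝓝 0) := by
        have hu2 := hu.const_mul 2
        rw [mul_zero] at hu2
        refine squeeze_zero (fun n => sq_nonneg _) (fun n => ?_) hu2
        have a2 := hDe n
        have a3 := d2 n
        have a4 := d3' n
        have a5 := n1 n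
        linarith
      have := this.sqrt
      simpa [Real.sqrt_sq_eq_abs] using this
    have t3 : Tendsto (fun n => (u n).2) atTop (𝓝 p.2) := by
      refine HS.tendsto_of_norm (fun i => ?_) t2
      apply h5 i (p.2 i)
      refine squeeze_zero (fun n => ?_) (fun n => ?_) hu
      · have := (h1 i).mid ((u n).2 i) (p.2 i)
        linarith
      · have a2 := hDe n
        have a3 := d2 n
        have a4 := d3 i n
        have a5 := n1 n
        have a6 := n2 n
        linarith
    exact t1.prodMk_nhds t3

end prods
end FSU

open Set Filter Topology
namespace FSU

set_option linter.unusedSectionVars false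

/-! ### Renorming -/

structure Sp where
  T : Type
  [n : NormedAddCommGroup T]
  [s : NormedSpace ℝ T]

attribute [instance] Sp.n Sp.s

def Cp (Y : Type) : Type := Y

theorem exists_renorm {Y : Type} [NormedAddCommGroup Y] [NormedSpace ℝ Y] (p : Seminorm ℝ Y)
    (c C : ℝ) (hc : 0 < c) (h1 : ∀ y, c * ‖y‖ ≤ p y) (h2 : ∀ y, p y ≤ C * ‖y‖) :
    ∃ (Y' : Sp) (e : Y ≃L[ℝ] Y'.T), ∀ y, ‖e y‖ = p y := by
  have hz : ∀ y : Y, p y = 0 → y = 0 := by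
    intro y h
    have := h1 y
    rw [h] at this
    have : ‖y‖ ≤ 0 := by
      by_contra! h3
      have := mul_pos hc h3
      linarith
    exact norm_le_zero_iff.1 this
  let i1 : AddCommGroup (Cp Y) := inferInstanceAs (AddCommGroup Y)
  let i2 : Module ℝ (Cp Y) := inferInstanceAs (Module ℝ Y)
  let i3 : Norm (Cp Y) := ⟨fun y => p y⟩
  have core : NormedSpace.Core ℝ (Cp Y) :=
    { norm_nonneg := fun y => apply_nonneg p y
      norm_smul := fun c y => map_smul_eq_mul p c y
      norm_triangle := fun x y => map_add_le_add p x y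
      norm_eq_zero_iff := fun y => by
        constructor
        · intro h
          exact hz y h
        · rintro rfl
          exact map_zero p }
  let i4 : NormedAddCommGroup (Cp Y) := NormedAddCommGroup.ofCore core
  let i5 : NormedSpace ℝ (Cp Y) := NormedSpace.ofCore core
  let e0 : Y ≃ₗ[ℝ] Cp Y := LinearEquiv.refl ℝ Y
  have hn : ∀ y, ‖e0 y‖ = p y := fun y => rfl
  let e : Y ≃L[ℝ] Cp Y := LinearEquiv.toContinuousLinearEquivOfBounds e0 C c⁻¹
    (fun y => by rw [hn]; exact h2 y)
    (fun y => by
      obtain ⟨x, rfl⟩ := e0.surjective y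
      rw [LinearEquiv.symm_apply_apply, hn, inv_mul_eq_div, le_div_iff₀ hc]
      linarith [h1 x])
  exact ⟨⟨Cp Y⟩, e, fun y => rfl⟩

theorem exists_renorm_sup {Y : Type} [NormedAddCommGroup Y] [NormedSpace ℝ Y] {τ : Type}
    [Nonempty τ] (q : τ → Seminorm ℝ Y)
    (c C : ℝ) (hc : 0 < c) (h1 : ∀ y K, (∀ t, q t y ≤ K) → c * ‖y‖ ≤ K)
    (h2 : ∀ t y, q t y ≤ C * ‖y‖) :
    ∃ (Y' : Sp) (e : Y ≃L[ℝ] Y'.T), (∀ t y, q t y ≤ ‖e y‖) ∧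
      ∀ y K, (∀ t, q t y ≤ K) → ‖e y‖ ≤ K := by
  have hbdd : ∀ y, BddAbove (range fun t => q t y) := fun y =>
    ⟨C * ‖y‖, by rintro _ ⟨t, rfl⟩; exact h2 t y⟩
  have hle : ∀ t y, q t y ≤ ⨆ t, q t y := fun t y => le_ciSup (hbdd y) t
  let p : Seminorm ℝ Y := Seminorm.ofSMulLE (fun y => ⨆ t, q t y) (by simp)
    (fun x y => ciSup_le fun t => (map_add_le_add (q t) x y).trans (add_le_add (hle t x) (hle t y)))
    (fun a y => ciSup_le fun t => by
      rw [map_smul_eq_mul]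
      exact mul_le_mul_of_nonneg_left (hle t y) (norm_nonneg a))
  have hp : ∀ y, p y = ⨆ t, q t y := fun y => rfl
  obtain ⟨Y', e, he⟩ := exists_renorm p c C hc
    (fun y => h1 y _ fun t => by rw [hp]; exact hle t y)
    (fun y => by rw [hp]; exact ciSup_le fun t => h2 t y)
  refine ⟨Y', e, fun t y => ?_, fun y K h => ?_⟩
  · rw [he, hp]; exact hle t y
  · rw [he, hp]; exact ciSup_le h

theorem complete_congr {Y Y' : Type} [NormedAddCommGroup Y] [NormedSpace ℝ Y]
    [NormedAddCommGroup Y'] [NormedSpace ℝ Y'] (e : Y ≃L[ℝ] Y') (h : CompleteSpace Y) :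
    CompleteSpace Y' := (completeSpace_congr (e := e.toEquiv) e.isUniformEmbedding).1 h

theorem separable_congr {Y Y' : Type} [NormedAddCommGroup Y] [NormedSpace ℝ Y]
    [NormedAddCommGroup Y'] [NormedSpace ℝ Y'] (e : Y ≃L[ℝ] Y')
    (h : TopologicalSpace.SeparableSpace Y) :
    TopologicalSpace.SeparableSpace Y' := e.surjective.denseRange.separableSpace e.continuous

/-! ### Nodes -/

inductive Nd {Q : Type} (r : Q → Q → Prop) : Q → Type
  | root (q : Q) : Nd r q
  | cons (q : Q) (c : {q' // r q q'}) (t : Nd r c.1) : Nd r q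

section nd
variable {Q : Type} {r : Q → Q → Prop}

def Nd.tip : {q : Q} → Nd r q → Q
  | _, .root q => q
  | _, .cons _ _ t => t.tip

def Nd.snoc : {q : Q} → (s : Nd r q) → (q' : Q) → r s.tip q' → Nd r q
  | _, .root q, q', h => .cons q ⟨q', h⟩ (.root q')
  | _, .cons q c t, q', h => .cons q c (t.snoc q' h)

theorem Nd.tip_snoc {q : Q} (s : Nd r q) (q' : Q) (h : r s.tip q') : (s.snoc q' h).tip = q' := by
  induction s with
  | root q => rfl
  | cons q c t ih => exact ih h

theorem Nd.exists_fun {q : Q} {M : Type} (A : M) (B : ∀ c : {q' // r q q'}, Nd r c.1 → M) :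
    ∃ f : Nd r q → M, f (.root q) = A ∧ ∀ c t, f (.cons q c t) = B c t := by
  let g : ∀ q' : Q, (t : Nd r q') → (∀ c : {q'' // r q' q''}, Nd r c.1 → M) → M :=
    fun q' t => Nd.rec (motive := fun q' _ => (∀ c : {q'' // r q' q''}, Nd r c.1 → M) → M)
      (fun _ _ => A) (fun _ c t _ B => B c t) t
  exact ⟨fun t => g q t B, rfl, fun c t => rfl⟩

variable {lev : Q → ℕ}

theorem Nd.lev_le (hlev : ∀ q q', r q q' → lev q' = lev q + 1) {q : Q} (s : Nd r q) :
    lev q ≤ lev s.tip := by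
  induction s with
  | root q => exact le_rfl
  | cons q c t ih =>
    have := hlev _ _ c.2
    change lev q ≤ lev t.tip
    omega

end nd

/-! ### Constants -/

noncomputable def th (n : ℕ) : ℝ := 1 - (1 / 2) ^ (n + 1)
noncomputable def bb (n : ℕ) : ℝ := (th n + th (n + 1)) / 2

theorem th_succ (n : ℕ) : th (n + 1) = th n + (1 / 2) ^ (n + 2) := by
  unfold th; rw [pow_succ]; ring

theorem th_lt (n : ℕ) : th n < th (n + 1) := by
  rw [th_succ]
  have : (0:ℝ) < (1 / 2) ^ (n + 2) := by positivity
  linarith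

theorem th_mono : Monotone th := monotone_nat_of_le_succ fun n => (th_lt n).le

theorem th_half (n : ℕ) : 1 / 2 ≤ th n := by
  have := th_mono (Nat.zero_le n)
  have h0 : th 0 = 1 / 2 := by unfold th; norm_num
  linarith

theorem th_lt_one (n : ℕ) : th n < 1 := by
  unfold th
  have : (0:ℝ) < (1 / 2) ^ (n + 1) := by positivity
  linarith

theorem th_lt_bb (n : ℕ) : th n < bb n := by
  have := th_lt n
  unfold bb; linarith

theorem bb_lt_th (n : ℕ) : bb n < th (n + 1) := by
  have := th_lt n
  unfold bb; linarith

/-! ### Systems of projections -/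

structure Sys (E : Type) [NormedAddCommGroup E] [NormedSpace ℝ E] where
  P : ℕ → E →L[ℝ] E
  norm_P : ∀ n a, ‖P n a‖ ≤ ‖a‖
  PP : ∀ k n, k ≤ n → ∀ a, P k (P n a) = P k a
  PP' : ∀ k n, k ≤ n → ∀ a, P n (P k a) = P k a
  fin : ∀ n, FiniteDimensional ℝ (LinearMap.range (P n : E →ₗ[ℝ] E))
  tend : ∀ a, Tendsto (fun n => P n a) atTop (𝓝 a)
  κ : ℕ → Type
  fκ : ∀ n, Fintype (κ n)
  e : ∀ n, κ n → StrongDual ℝ E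
  e_le : ∀ n i a, |e n i a| ≤ ‖a‖
  norming : ∀ n a (C : ℝ), 0 ≤ C → P n a = a → (∀ i, |e n i a| ≤ C) → ‖a‖ ≤ C

section sys
variable {E : Type} [NormedAddCommGroup E] [NormedSpace ℝ E] (S : Sys E)

instance (n : ℕ) : Fintype (S.κ n) := S.fκ n

abbrev Sys.F (n : ℕ) : Submodule ℝ E := LinearMap.range (S.P n : E →ₗ[ℝ] E)

instance (n : ℕ) : FiniteDimensional ℝ (S.F n) := S.fin n

theorem Sys.mem_F {n : ℕ} {a : E} : a ∈ S.F n ↔ S.P n a = a := by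
  constructor
  · rintro ⟨b, rfl⟩
    exact S.PP' n n le_rfl b
  · intro h; exact ⟨a, h⟩

theorem Sys.F_mono {k n : ℕ} (h : k ≤ n) {a : E} (ha : S.P k a = a) : S.P n a = a := by
  rw [← ha, S.PP' k n h]

noncomputable def Sys.bet : ℕ → E →L[ℝ] E
  | 0 => 0
  | (m + 1) => th m • S.P m

noncomputable def Sys.gam (m : ℕ) : E →L[ℝ] E := th m • S.P m - S.bet m

theorem Sys.bet_succ (m : ℕ) (a : E) : S.bet (m + 1) a = th m • S.P m a := rfl

theorem Sys.gam_apply (m : ℕ) (a : E) : S.gam m a = th m • S.P m a - S.bet m a := rfl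

theorem Sys.norm_thP (m : ℕ) (a : E) : ‖th m • S.P m a‖ ≤ th m * ‖a‖ := by
  have h := th_half m
  rw [norm_smul, Real.norm_of_nonneg (by linarith)]
  have := S.norm_P m a
  gcongr

theorem Sys.norm_bet (m : ℕ) (a : E) : ‖S.bet m a‖ ≤ ‖a‖ := by
  cases m with
  | zero => simp [Sys.bet]
  | succ m =>
    rw [S.bet_succ]
    have := S.norm_thP m a
    nlinarith [th_lt_one m, norm_nonneg a]

theorem Sys.gam_mem (m : ℕ) (a : E) : S.gam m a ∈ S.F m := by
  rw [S.mem_F, S.gam_apply, map_sub, map_smul, S.PP' m m le_rfl]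
  cases m with
  | zero => simp [Sys.bet]
  | succ m => rw [S.bet_succ, map_smul, S.PP' m (m + 1) (by omega)]

theorem Sys.norm_gam (m : ℕ) (a : E) : ‖S.gam m a‖ ≤ 2 * ‖a‖ := by
  rw [S.gam_apply]
  have h1 := S.norm_thP m a
  have h2 := S.norm_bet m a
  have := norm_sub_le (th m • S.P m a) (S.bet m a)
  nlinarith [th_lt_one m, norm_nonneg a]

theorem Sys.gam_succ (m : ℕ) (a : E) (ha : S.P m a = a) :
    S.gam (m + 1) a = (th (m + 1) - th m) • a := by
  rw [S.gam_apply, S.bet_succ, S.F_mono (Nat.le_succ m) ha, ha, sub_smul]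

end sys
end FSU

open Set Filter Topology
namespace FSU

set_option linter.unusedSectionVars false

section ind
variable {E : Type} [NormedAddCommGroup E] [NormedSpace ℝ E] (S : Sys E)
  {Q : Type} (r : Q → Q → Prop) (lev : Q → ℕ)

structure Props (q : Q) (Y : Sp) (L : Nd r q → Y.T →L[ℝ] E) (z : Nd r q → E →L[ℝ] Y.T) : Prop where
  complete : CompleteSpace Y.T
  separable : TopologicalSpace.SeparableSpace Y.T
  refl : Refl Y.T
  lur : HasLUR Y.T
  sm : HasSm Y.T
  normL : ∀ t y, ‖L t y‖ ≤ ‖y‖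
  Lz_le : ∀ t s a, ‖S.bet (lev q) a + L t (z s a)‖ ≤ th (lev t.tip) * ‖a‖
  Lz_eq : ∀ s a, S.bet (lev q) a + L s (z s a) = th (lev s.tip) • S.P (lev s.tip) a
  normz : ∀ s a, ‖z s a‖ ≤ 2 * ‖a‖
  zroot : ∀ a, ‖z (Nd.root q) a‖ ≤ ‖S.gam (lev q) a‖
  zsnoc : ∀ s q' h a, S.P (lev s.tip) a = a →
    ‖z (s.snoc q' h) a - z s a‖ ≤ (th (lev s.tip + 1) - th (lev s.tip)) * ‖a‖
  lf : ∀ ξ, S.P (lev q) ξ = ξ → ∀ x,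
    (∀ (t : Nd r q) i, |S.e (lev t.tip) i (ξ + L t x)| ≤ bb (lev t.tip)) →
    ∃ A : Set (Nd r q), A.Finite ∧ ∀ᶠ p : E × Y.T in 𝓝 (ξ, x), ∀ t ∉ A, ∀ i,
      |S.e (lev t.tip) i (p.1 + L t p.2)| ≤ th (lev t.tip)

theorem props_step [Countable Q] (hlev : ∀ q q', r q q' → lev q' = lev q + 1) (q : Q)
    (IH : ∀ c : {q' // r q q'}, ∃ Y L z, Props S r lev c.1 Y L z) :
    ∃ Y L z, Props S r lev q Y L z := by
  classical
  choose Y L z H using IH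
  set m := lev q with hm
  have hlc : ∀ c : {q' // r q q'}, lev c.1 = m + 1 := fun c => hlev _ _ c.2
  let W := S.F m × HS (fun c => (Y c).T)
  let ι : S.F m →L[ℝ] E := (S.F m).subtypeL
  let G : E →L[ℝ] S.F m := (S.gam m).codRestrict (S.F m) (S.gam_mem m)
  have hιG : ∀ a, ι (G a) = S.gam m a := fun a => rfl
  have hιn : ∀ x, ‖ι x‖ = ‖x‖ := fun x => rfl
  let fstW : W →L[ℝ] S.F m := ContinuousLinearMap.fst ℝ _ _
  let sndW : W →L[ℝ] HS (fun c => (Y c).T) := ContinuousLinearMap.snd ℝ _ _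
  obtain ⟨L0, hL0r, hL0c⟩ := Nd.exists_fun (r := r) (q := q) (M := W →L[ℝ] E) (ι.comp fstW)
    (fun c t => ι.comp fstW + (L c t).comp ((HS.proj c).comp sndW))
  obtain ⟨z0, hz0r, hz0c⟩ := Nd.exists_fun (r := r) (q := q) (M := E →L[ℝ] W)
    ((ContinuousLinearMap.inl ℝ _ _).comp G)
    (fun c t => (ContinuousLinearMap.inl ℝ _ _).comp G +
      (ContinuousLinearMap.inr ℝ _ _).comp ((HS.sg c).comp (z c t)))
  have Lr : ∀ v : W, L0 (.root q) v = ι v.1 := fun v => by rw [hL0r]; rfl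
  have Lc : ∀ c t (v : W), L0 (.cons q c t) v = ι v.1 + L c t (v.2 c) := fun c t v => by
    rw [hL0c]; rfl
  have zr : ∀ a, z0 (.root q) a = (G a, 0) := fun a => by rw [hz0r]; rfl
  have zc : ∀ c t a, z0 (.cons q c t) a = (G a, HS.sg c (z c t a)) := fun c t a => by
    rw [hz0c]
    have h := zero_add (HS.sg (Y := fun c => (Y c).T) c (z c t a))
    exact Prod.ext (add_zero (G a)) h
  have Lnorm : ∀ t (v : W), ‖L0 t v‖ ≤ ‖v.1‖ + ‖v.2‖ := by
    intro t v
    cases t with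
    | root => rw [Lr, hιn]; linarith [norm_nonneg v.2]
    | cons _ c t =>
      rw [Lc]
      refine (norm_add_le _ _).trans ?_
      rw [hιn]
      have := (H c).normL t (v.2 c)
      have := HS.norm_apply_le v.2 c
      linarith
  let qs : Option (Nd r q) → Seminorm ℝ W := fun o => o.elim
    ((normSeminorm ℝ _).comp sndW.toLinearMap)
    (fun t => (normSeminorm ℝ E).comp (L0 t).toLinearMap)
  have qs0 : ∀ v : W, qs none v = ‖v.2‖ := fun v => rfl
  have qs1 : ∀ t (v : W), qs (some t) v = ‖L0 t v‖ := fun t v => rfl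
  obtain ⟨V, eq, he1, he2⟩ := exists_renorm_sup qs 1 2 one_pos
    (by
      intro v K hK
      rw [one_mul, Prod.norm_def]
      refine max_le ?_ (hK none)
      have := hK (some (.root q))
      rwa [qs1, Lr, hιn] at this)
    (by
      intro o v
      have h1 := norm_fst_le v
      have h2 := norm_snd_le v
      cases o with
      | none => rw [qs0]; linarith [norm_nonneg v]
      | some t => rw [qs1]; linarith [Lnorm t v])
  have heL : ∀ t v, ‖L0 t v‖ ≤ ‖eq v‖ := fun t v => he1 (some t) v
  have he2' : ∀ v K, ‖v.2‖ ≤ K → (∀ t, ‖L0 t v‖ ≤ K) → ‖eq v‖ ≤ K := fun v K h1 h2 =>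
    he2 v K fun o => by
      cases o with
      | none => exact h1
      | some t => exact h2 t
  -- the norm of vectors supported off the first coordinate
  have he0 : ∀ y, ‖eq (0, y)‖ ≤ ‖y‖ := fun y => he2' _ _ le_rfl fun t => by
    have := Lnorm t (0, y)
    simpa using this
  have ethn : ∀ t : Nd r q, th m ≤ th (lev t.tip) := fun t => th_mono (Nd.lev_le hlev t)
  have rootval : ∀ a, S.bet m a + ι (G a) = th m • S.P m a := fun a => by
    rw [hιG, S.gam_apply]; abel
  have Lz_le : ∀ t s a, ‖S.bet m a + L0 t (z0 s a)‖ ≤ th (lev t.tip) * ‖a‖ := by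
    intro t s a
    have hroot : ‖th m • S.P m a‖ ≤ th (lev t.tip) * ‖a‖ :=
      (S.norm_thP m a).trans (mul_le_mul_of_nonneg_right (ethn t) (norm_nonneg a))
    cases t with
    | root =>
      have : (z0 s a).1 = G a := by
        cases s with
        | root => rw [zr]
        | cons _ c s => rw [zc]
      rw [Lr, this, rootval]; exact hroot
    | cons _ c t =>
      cases s with
      | root =>
        have h0 : L0 (.cons q c t) (z0 (.root q) a) = ι (G a) := by
          rw [Lc, zr]
          have : ((0 : HS (fun c => (Y c).T)) c) = 0 := rfl
          simp [this]
        rw [h0, rootval]; exact hroot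
      | cons _ c' s =>
        rw [Lc, zc, ← add_assoc, rootval]
        by_cases hcc : c = c'
        · subst hcc
          have := (H c).Lz_le t s a
          rw [hlc c, S.bet_succ] at this
          dsimp only
          rw [HS.sg_self]
          exact this
        · dsimp only
          rw [HS.sg_ne _ hcc, map_zero, add_zero]; exact hroot
  refine ⟨V, fun t => (L0 t).comp (eq.symm : V.T →L[ℝ] W), fun s => (eq : W →L[ℝ] V.T).comp (z0 s),
    ?_⟩
  have hFcomp : CompleteSpace (S.F m) := FiniteDimensional.complete ℝ _
  have hFsep : TopologicalSpace.SeparableSpace (S.F m) := by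
    have : ProperSpace (S.F m) := FiniteDimensional.proper ℝ _
    infer_instance
  have n1 : ∀ (i : S.κ m) (a : S.F m), |((S.e m i).comp ι) a| ≤ ‖a‖ := fun i a => S.e_le m i a
  have n2 : ∀ (a : S.F m) (C : ℝ), 0 ≤ C → (∀ i, |((S.e m i).comp ι) a| ≤ C) → ‖a‖ ≤ C :=
    fun a C hC h => S.norming m a C hC (S.mem_F.1 a.2) h
  have hW : Refl W := Refl.prod refl_finite (HS.refl fun c => (H c).refl)
  have hV : Refl V.T := hW.congr eq
  refine ⟨?_, ?_, hV, ?_, ?_, ?_, ?_, ?_, ?_, ?_, ?_, ?_⟩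
  · have : ∀ c, CompleteSpace (Y c).T := fun c => (H c).complete
    exact complete_congr eq inferInstance
  · have : ∀ c, TopologicalSpace.SeparableSpace (Y c).T := fun c => (H c).separable
    have := HS.separable (Y := fun c => (Y c).T)
    exact separable_congr eq inferInstance
  · exact hasLUR_prod (fun i => (S.e m i).comp ι) n1 n2 (fun c => (H c).lur) eq
  · exact ((hasSmW_prod (fun i => (S.e m i).comp ι) n1 n2 (fun c => (H c).sm)).congr eq).hasSm hV
  · intro t y
    obtain ⟨v, rfl⟩ := eq.surjective y
    simpa using heL t v
  · intro t s a
    simpa using Lz_le t s a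
  · intro s a
    simp only [ContinuousLinearMap.comp_apply, ContinuousLinearEquiv.coe_coe,
      ContinuousLinearEquiv.symm_apply_apply]
    cases s with
    | root => rw [Lr, zr]; exact rootval a
    | cons _ c s =>
      rw [Lc, zc, ← add_assoc]
      dsimp only
      rw [← hm, rootval, HS.sg_self]
      have := (H c).Lz_eq s a
      rw [hlc c, S.bet_succ] at this
      exact this
  · intro s a
    change ‖eq (z0 s a)‖ ≤ _
    refine he2' _ _ ?_ fun t => ?_
    · cases s with
      | root => rw [zr]; simp
      | cons _ c s =>
        rw [zc]
        dsimp only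
        rw [HS.norm_sg]
        exact (H c).normz s a
    · have h1 := Lz_le t s a
      have h2 := S.norm_bet m a
      have h3 := norm_sub_le (S.bet m a + L0 t (z0 s a)) (S.bet m a)
      rw [add_sub_cancel_left] at h3
      have := th_lt_one (lev t.tip)
      nlinarith [norm_nonneg a]
  · intro a
    change ‖eq (z0 (.root q) a)‖ ≤ _
    rw [zr]
    refine he2' _ _ (by simp) fun t => ?_
    have := Lnorm t (G a, 0)
    rw [norm_zero, add_zero] at this
    exact this
  · intro s q' h a ha
    change ‖eq (z0 (s.snoc q' h) a) - eq (z0 s a)‖ ≤ _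
    rw [← map_sub]
    cases s with
    | root =>
      rw [show (Nd.root q : Nd r q).snoc q' h = .cons q ⟨q', h⟩ (.root q') from rfl, zc, zr,
        Prod.mk_sub_mk, sub_self, sub_zero]
      refine (he0 _).trans ?_
      rw [HS.norm_sg]
      refine ((H ⟨q', h⟩).zroot a).trans ?_
      rw [hlc, S.gam_succ m a ha, norm_smul, Real.norm_of_nonneg (by linarith [th_lt m])]
      exact le_rfl
    | cons _ c s =>
      rw [show (Nd.cons q c s : Nd r q).snoc q' h = .cons q c (s.snoc q' h) from rfl, zc, zc,
        Prod.mk_sub_mk, sub_self, ← map_sub]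
      refine (he0 _).trans ?_
      rw [HS.norm_sg]
      exact (H c).zsnoc s q' h a ha
  · intro ξ hξ x hx
    obtain ⟨v, rfl⟩ := eq.surjective x
    simp only [ContinuousLinearMap.comp_apply, ContinuousLinearEquiv.coe_coe,
      ContinuousLinearEquiv.symm_apply_apply] at hx ⊢
    set X := ξ + ι v.1 with hX
    have hXP : S.P m X = X := by
      rw [hX, map_add, hξ]; congr 1; exact S.mem_F.1 v.1.2
    have hXn : ‖X‖ ≤ bb m := by
      refine S.norming m X (bb m) ?_ hXP fun i => ?_
      · linarith [th_half m, th_lt_bb m]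
      · have := hx (.root q) i
        rw [Lr] at this
        exact this
    set g := th (m + 1) - bb m with hg
    have hgpos : 0 < g := by linarith [bb_lt_th m]
    obtain ⟨A0, hA0⟩ := HS.tail v.2 (g / 4) (by positivity)
    have hA0' : ∀ c ∉ A0, ‖v.2 c‖ < g / 4 := fun c hc => by
      have := HS.norm_apply_le (v.2 - ∑ i ∈ A0, HS.sg i (v.2 i)) c
      rw [HS.tail_apply _ _ hc] at this
      linarith
    have IH : ∀ c, ∃ A : Set (Nd r c.1), A.Finite ∧ ∀ᶠ p : E × (Y c).T in 𝓝 (X, v.2 c),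
        ∀ t ∉ A, ∀ i, |S.e (lev t.tip) i (p.1 + L c t p.2)| ≤ th (lev t.tip) := by
      intro c
      apply (H c).lf X (by rw [hlc]; exact S.F_mono (Nat.le_succ m) hXP)
      intro t i
      have := hx (.cons q c t) i
      rw [Lc, ← add_assoc] at this
      exact this
    choose A hAf hA using IH
    refine ⟨{.root q} ∪ ⋃ c ∈ A0, (fun t => Nd.cons q c t) '' A c, ?_, ?_⟩
    · refine (finite_singleton _).union ?_
      exact A0.finite_toSet.biUnion fun c _ => (hAf c).image _
    · have cont1 : Continuous fun p : E × V.T => p.1 + ι (eq.symm p.2).1 :=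
        continuous_fst.add (ι.continuous.comp (fstW.continuous.comp
          (eq.symm.continuous.comp continuous_snd)))
      have cont2 : Continuous fun p : E × V.T => (eq.symm p.2).2 :=
        sndW.continuous.comp (eq.symm.continuous.comp continuous_snd)
      have ev1 : ∀ᶠ p : E × V.T in 𝓝 (ξ, eq v), ‖p.1 + ι (eq.symm p.2).1‖ < bb m + g / 4 := by
        apply (cont1.norm.tendsto (ξ, eq v)).eventually (gt_mem_nhds _)
        simp only [ContinuousLinearEquiv.symm_apply_apply]
        linarith
      have ev2 : ∀ᶠ p : E × V.T in 𝓝 (ξ, eq v), ‖(eq.symm p.2).2 - v.2‖ < g / 4 := by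
        apply ((cont2.sub continuous_const).norm.tendsto (ξ, eq v)).eventually (gt_mem_nhds _)
        have : ‖(eq.symm (eq v)).2 - v.2‖ = 0 := by
          rw [ContinuousLinearEquiv.symm_apply_apply, sub_self, norm_zero]
        change ‖(eq.symm (eq v)).2 - v.2‖ < g / 4
        rw [this]; linarith
      have ev3 : ∀ᶠ p : E × V.T in 𝓝 (ξ, eq v), ∀ c ∈ A0, ∀ t ∉ A c, ∀ i,
          |S.e (lev t.tip) i (p.1 + ι (eq.symm p.2).1 + L c t ((eq.symm p.2).2 c))| ≤
            th (lev t.tip) := by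
        rw [Finset.eventually_all]
        intro c _
        have cont3 : Continuous fun p : E × V.T =>
          (p.1 + ι (eq.symm p.2).1, (HS.proj c) (eq.symm p.2).2) :=
          cont1.prodMk ((HS.proj c).continuous.comp cont2)
        have ht := cont3.tendsto (ξ, eq v)
        simp only [ContinuousLinearEquiv.symm_apply_apply] at ht
        exact ht.eventually (hA c)
      filter_upwards [ev1, ev2, ev3] with p h1 h2 h3 t ht i
      cases t with
      | root => exact absurd (Or.inl rfl) ht
      | cons _ c t =>
        rw [Lc, ← add_assoc]
        by_cases hc : c ∈ A0
        · refine h3 c hc t (fun htA => ht (Or.inr ?_)) i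
          simp only [mem_iUnion]
          exact ⟨c, hc, t, htA, rfl⟩
        · refine (S.e_le _ _ _).trans ?_
          refine (norm_add_le _ _).trans ?_
          have a1 := (H c).normL t ((eq.symm p.2).2 c)
          have a2 := HS.norm_apply_le ((eq.symm p.2).2 - v.2) c
          have a3 : ((eq.symm p.2).2 - v.2 : HS (fun c => (Y c).T)) c =
            (eq.symm p.2).2 c - v.2 c := rfl
          rw [a3] at a2
          have a4 := norm_sub_norm_le ((eq.symm p.2).2 c) (v.2 c)
          have a5 := hA0' c hc
          have a6 : th (m + 1) ≤ th (lev t.tip) := by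
            rw [← hlc c]; exact th_mono (Nd.lev_le hlev t)
          change _ ≤ th (lev t.tip)
          linarith

theorem props_all [Countable Q] (hlev : ∀ q q', r q q' → lev q' = lev q + 1)
    (hwf : WellFounded (fun q' q => r q q')) (q : Q) :
    ∃ Y L z, Props S r lev q Y L z :=
  hwf.induction q fun q IH => props_step S r lev hlev q fun c => IH c.1 c.2

end ind
end FSU

open Set Filter Topology
namespace FSU

set_option linter.unusedSectionVars false

noncomputable def phi (τ t : ℝ) : ℝ := (max (|t| - τ) 0) ^ 2

theorem phi_le {τ c : ℝ} (hc : |c| ≤ τ) (t : ℝ) : phi τ t ≤ (t - c) ^ 2 := by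
  unfold phi
  rw [← sq_abs (t - c)]
  have : |t| - |c| ≤ |t - c| := abs_sub_abs_le_abs_sub t c
  have h1 : max (|t| - τ) 0 ≤ |t - c| := max_le (by linarith) (abs_nonneg _)
  have h2 : 0 ≤ max (|t| - τ) 0 := le_max_right _ _
  gcongr

theorem phi_eq {τ : ℝ} (hτ : 0 ≤ τ) (t : ℝ) : ∃ c, |c| ≤ τ ∧ phi τ t = (t - c) ^ 2 := by
  unfold phi
  by_cases h : |t| ≤ τ
  · exact ⟨t, h, by rw [max_eq_right (by linarith)]; ring⟩
  · push Not at h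
    rw [max_eq_left (by linarith)]
    rcases le_total 0 t with ht | ht
    · exact ⟨τ, by rw [abs_of_nonneg hτ], by rw [abs_of_nonneg ht]⟩
    · exact ⟨-τ, by rw [abs_neg, abs_of_nonneg hτ], by rw [abs_of_nonpos ht]; ring⟩

theorem phi_cvx {τ : ℝ} (hτ : 0 ≤ τ) : Cvx (phi τ) := by
  intro s t a b ha hb hab
  obtain ⟨c, hc, h1⟩ := phi_eq hτ s
  obtain ⟨d, hd, h2⟩ := phi_eq hτ t
  rw [h1, h2]
  have hcd : |a * c + b * d| ≤ τ := by
    refine (abs_add_le _ _).trans ?_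
    rw [abs_mul, abs_mul, abs_of_nonneg ha, abs_of_nonneg hb]
    nlinarith
  refine (phi_le hcd _).trans ?_
  have := real_sq_combo (s - c) (t - d) a b ha hb hab
  simp only [smul_eq_mul]
  have e : a * s + b * t - (a * c + b * d) = a * (s - c) + b * (t - d) := by ring
  rw [e]; exact this

theorem phi_sec {τ : ℝ} (hτ : 0 ≤ τ) (t : ℝ) : SecDiff (phi τ) t := by
  intro ε hε
  obtain ⟨c, hc, h1⟩ := phi_eq hτ t
  obtain ⟨δ, hδ, H⟩ := secDiff_sq (t - c) ε hε
  refine ⟨δ, hδ, fun h hh => ?_⟩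
  have h2 := phi_le hc (t + h)
  have h3 := phi_le hc (t - h)
  have := H h hh
  rw [h1]
  have e1 : t - c + h = t + h - c := by ring
  have e2 : t - c - h = t - h - c := by ring
  rw [e1, e2] at this
  linarith

theorem phi_zero {τ t : ℝ} (h : |t| ≤ τ) : phi τ t = 0 := by
  unfold phi; rw [max_eq_right (by linarith)]; norm_num

theorem phi_neg (τ t : ℝ) : phi τ (-t) = phi τ t := by unfold phi; rw [abs_neg]

theorem phi_nonneg (τ t : ℝ) : 0 ≤ phi τ t := sq_nonneg _

theorem phi_le_sq {τ : ℝ} (hτ : 0 ≤ τ) (t : ℝ) : phi τ t ≤ t ^ 2 := by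
  have := phi_le (τ := τ) (c := 0) (by simpa using hτ) t
  simpa using this

theorem phi_bound {τ β t : ℝ} (h : τ < β) (hp : phi τ t ≤ (β - τ) ^ 2) : |t| ≤ β := by
  unfold phi at hp
  have := abs_le_of_sq_le_sq hp (by linarith)
  have h2 := le_max_left (|t| - τ) 0
  have := le_abs_self (max (|t| - τ) 0)
  linarith

section rn
variable {Y : Type} [NormedAddCommGroup Y] [NormedSpace ℝ Y] {J : Type}

structure RN (g : J → StrongDual ℝ Y) (τ β : J → ℝ) (H : Y → ℝ) : Prop where
  tau : ∀ j, 1 / 2 ≤ τ j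
  lt : ∀ j, τ j < β j
  norm_g : ∀ j y, |g j y| ≤ ‖y‖
  lf : ∀ x, (∀ j, |g j x| ≤ β j) → ∃ A : Finset J, ∀ᶠ y in 𝓝 x, ∀ j ∉ A, |g j y| ≤ τ j
  cvx : Cvx H
  even : ∀ x, H (-x) = H x
  lo : ∀ x, ‖x‖ ^ 2 / 2 ≤ H x
  up : ∀ x, H x ≤ 2 * ‖x‖ ^ 2

variable {g : J → StrongDual ℝ Y} {τ β : J → ℝ} {H : Y → ℝ}

noncomputable def Phi (g : J → StrongDual ℝ Y) (τ β : J → ℝ) (H : Y → ℝ) (A : Finset J) (x : Y) : ℝ :=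
  (∑ j ∈ A, (1 / (β j - τ j) ^ 2) * phi (τ j) (g j x)) + (1 / 8) * H x

theorem RN.c_pos (h : RN g τ β H) (j : J) : 0 < 1 / (β j - τ j) ^ 2 := by
  have := h.lt j
  have : 0 < β j - τ j := by linarith
  positivity

theorem RN.tau0 (h : RN g τ β H) (j : J) : 0 ≤ τ j := by linarith [h.tau j]

theorem RN.Phi_cvx (h : RN g τ β H) (A : Finset J) : Cvx (Phi g τ β H A) :=
  (Cvx.finsum A fun j => ((phi_cvx (h.tau0 j)).comp (g j)).mul_const (h.c_pos j).le).add
    (h.cvx.mul_const (by norm_num))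

theorem RN.term_nonneg (h : RN g τ β H) (j : J) (x : Y) :
    0 ≤ (1 / (β j - τ j) ^ 2) * phi (τ j) (g j x) :=
  mul_nonneg (h.c_pos j).le (phi_nonneg _ _)

theorem RN.H_nonneg (h : RN g τ β H) (x : Y) : 0 ≤ H x :=
  le_trans (by positivity) (h.lo x)

theorem RN.Phi_nonneg (h : RN g τ β H) (A : Finset J) (x : Y) : 0 ≤ Phi g τ β H A x :=
  add_nonneg (Finset.sum_nonneg fun j _ => h.term_nonneg j x)
    (mul_nonneg (by norm_num) (h.H_nonneg x))

theorem RN.Phi_up (h : RN g τ β H) (A : Finset J) :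
    ∃ K, 0 ≤ K ∧ ∀ x, Phi g τ β H A x ≤ K * ‖x‖ ^ 2 := by
  refine ⟨∑ j ∈ A, (1 / (β j - τ j) ^ 2) + 1 / 4, ?_, fun x => ?_⟩
  · have := Finset.sum_nonneg fun j (_ : j ∈ A) => (h.c_pos j).le
    linarith
  · unfold Phi
    rw [add_mul, Finset.sum_mul]
    refine add_le_add (Finset.sum_le_sum fun j _ => ?_) (by linarith [h.up x])
    refine mul_le_mul_of_nonneg_left ?_ (h.c_pos j).le
    refine (phi_le_sq (h.tau0 j) _).trans ?_
    rw [← sq_abs]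
    have := h.norm_g j x
    gcongr

theorem RN.Phi_cont (h : RN g τ β H) (A : Finset J) : Continuous (Phi g τ β H A) := by
  obtain ⟨K, _, hK⟩ := h.Phi_up A
  exact (h.Phi_cvx A).continuous hK

theorem RN.Phi_even (h : RN g τ β H) (A : Finset J) (x : Y) :
    Phi g τ β H A (-x) = Phi g τ β H A x := by
  unfold Phi
  rw [h.even]
  simp only [map_neg, phi_neg]

theorem RN.Phi_mono (h : RN g τ β H) {A B : Finset J} (hAB : A ⊆ B) (x : Y) :
    Phi g τ β H A x ≤ Phi g τ β H B x :=
  add_le_add (Finset.sum_le_sum_of_subset_of_nonneg hAB fun j _ _ => h.term_nonneg j x) le_rfl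

def Ball (g : J → StrongDual ℝ Y) (τ β : J → ℝ) (H : Y → ℝ) : Set Y :=
  {x | ∀ A, Phi g τ β H A x ≤ 1}

theorem RN.ball_bound (h : RN g τ β H) {x : Y} (hx : x ∈ Ball g τ β H) (j : J) : |g j x| ≤ β j := by
  apply phi_bound (h.lt j)
  have h1 := hx {j}
  unfold Phi at h1
  rw [Finset.sum_singleton] at h1
  have h2 := h.H_nonneg x
  have h3 : 0 < β j - τ j := by linarith [h.lt j]
  have : 1 / (β j - τ j) ^ 2 * phi (τ j) (g j x) ≤ 1 := by linarith
  rw [one_div, inv_mul_le_iff₀ (by positivity)] at this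
  linarith

theorem RN.ball_norm (h : RN g τ β H) {x : Y} (hx : x ∈ Ball g τ β H) : ‖x‖ ≤ 4 := by
  have h1 := hx ∅
  unfold Phi at h1
  rw [Finset.sum_empty] at h1
  have h2 := h.lo x
  nlinarith [norm_nonneg x]

theorem RN.ball_mem (h : RN g τ β H) {x : Y} (h1 : ∀ j, |g j x| ≤ τ j) (h2 : ‖x‖ ≤ 2) :
    x ∈ Ball g τ β H := by
  intro A
  unfold Phi
  rw [Finset.sum_eq_zero fun j _ => by rw [phi_zero (h1 j), mul_zero]]
  have := h.up x
  nlinarith [norm_nonneg x]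

theorem RN.ball_nhds (h : RN g τ β H) {x : Y} (hx : x ∈ Ball g τ β H) :
    ∃ A, ∀ᶠ y in 𝓝 x, Phi g τ β H A y ≤ 1 → y ∈ Ball g τ β H := by
  classical
  obtain ⟨A, hA⟩ := h.lf x (h.ball_bound hx)
  refine ⟨A, hA.mono fun y hy h1 B => ?_⟩
  refine (h.Phi_mono (Finset.subset_union_right (s₁ := A)) y).trans (le_trans (le_of_eq ?_) h1)
  unfold Phi
  congr 1
  symm
  apply Finset.sum_subset Finset.subset_union_left
  intro j _ hj
  rw [phi_zero (hy j hj), mul_zero]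

theorem RN.exists_norm (h : RN g τ β H) : ∃ p : Seminorm ℝ Y, (∀ y, 1 / 4 * ‖y‖ ≤ p y) ∧
    (∀ y, p y ≤ 2 * ‖y‖) ∧ ∀ y, p y ≤ 1 ↔ y ∈ Ball g τ β H := by
  have hconv : Convex ℝ (Ball g τ β H) := by
    intro x hx y hy a b ha hb hab A
    have := h.Phi_cvx A x y a b ha hb hab
    have := hx A
    have := hy A
    nlinarith
  have hclosed : IsClosed (Ball g τ β H) := by
    have : Ball g τ β H = ⋂ A, {x | Phi g τ β H A x ≤ 1} := by
      ext x; simp [Ball]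
    rw [this]
    exact isClosed_iInter fun A => isClosed_le (h.Phi_cont A) continuous_const
  have hmem : ∀ x : Y, ‖x‖ ≤ 1 / 2 → x ∈ Ball g τ β H := fun x hx =>
    h.ball_mem (fun j => by linarith [h.norm_g j x, h.tau j]) (by linarith)
  have hnhds : Ball g τ β H ∈ 𝓝 (0 : Y) := by
    refine mem_of_superset (Metric.closedBall_mem_nhds 0 (by norm_num : (0:ℝ) < 1 / 2)) ?_
    intro x hx
    exact hmem x (by simpa using hx)
  have hneg : ∀ x ∈ Ball g τ β H, -x ∈ Ball g τ β H := fun x hx A => by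
    rw [h.Phi_even]; exact hx A
  have hbal : Balanced ℝ (Ball g τ β H) := by
    rw [balanced_iff_smul_mem]
    intro a ha x hx
    have h0 : (0 : Y) ∈ Ball g τ β H := hmem 0 (by simp)
    rw [Real.norm_eq_abs] at ha
    rcases le_total 0 a with h' | h'
    · rw [abs_of_nonneg h'] at ha
      exact hconv.smul_mem_of_zero_mem h0 hx ⟨h', ha⟩
    · rw [abs_of_nonpos h'] at ha
      have := hconv.smul_mem_of_zero_mem h0 (hneg x hx) ⟨by linarith, ha⟩
      simpa using this
  have habs : Absorbent ℝ (Ball g τ β H) := absorbent_nhds_zero hnhds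
  have hiff : ∀ y, gauge (Ball g τ β H) y ≤ 1 ↔ y ∈ Ball g τ β H := fun y => by
    rw [gauge_le_one_iff_mem_closure hconv hnhds, hclosed.closure_eq]
  let p := gaugeSeminorm hbal hconv habs
  have hp : ∀ y, p y ≤ 1 ↔ y ∈ Ball g τ β H := hiff
  refine ⟨p, fun y => ?_, fun y => ?_, hp⟩
  · by_contra! hlt
    have hpos := lt_of_le_of_lt (apply_nonneg p y) hlt
    set c := 1 / 4 * ‖y‖ with hc
    -- choose scale between
    obtain ⟨d, hd1, hd2⟩ := exists_between hlt
    have hd0 : 0 < d := lt_of_le_of_lt (apply_nonneg p y) hd1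
    have : p (d⁻¹ • y) ≤ 1 := by
      rw [map_smul_eq_mul, Real.norm_of_nonneg (by positivity), inv_mul_le_iff₀ hd0]
      linarith
    have := h.ball_norm ((hp _).1 this)
    rw [norm_smul, Real.norm_of_nonneg (by positivity), inv_mul_le_iff₀ hd0] at this
    linarith
  · rcases eq_or_ne y 0 with rfl | hy
    · simp
    · have hy' : 0 < ‖y‖ := norm_pos_iff.2 hy
      have h1 := (hp ((2 * ‖y‖)⁻¹ • y)).2 (hmem _ (by
        rw [norm_smul, Real.norm_of_nonneg (by positivity)]
        apply le_of_eq; field_simp))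
      rw [map_smul_eq_mul, Real.norm_of_nonneg (by positivity), inv_mul_le_iff₀ (by positivity)] at h1
      linarith

/-! #### Smoothness -/

theorem RN.smooth (h : RN g τ β H) (hH : ∀ x, SecDiff H x) {p : Seminorm ℝ Y}
    (hp2 : ∀ y, p y ≤ 2 * ‖y‖) (hp : ∀ y, p y ≤ 1 ↔ y ∈ Ball g τ β H) (x : Y) (hx : p x = 1) :
    DifferentiableAt ℝ p x := by
  obtain ⟨A, hA⟩ := h.ball_nhds ((hp x).1 hx.le)
  set Φ := Phi g τ β H A with hΦ
  have hcv : Cvx Φ := h.Phi_cvx A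
  have hcont : Continuous Φ := h.Phi_cont A
  have hsec : SecDiff Φ x := (SecDiff.finsum A fun j _ =>
    ((phi_sec (h.tau0 j) (g j x)).comp (g j)).mul_const (h.c_pos j)).add
      ((hH x).mul_const (by norm_num))
  have hΦ0 : Φ 0 = 0 := by
    obtain ⟨K, hK0, hK⟩ := h.Phi_up A
    have h1 := hK 0
    have h2 := h.Phi_nonneg A 0
    rw [norm_zero] at h1
    apply le_antisymm _ h2
    simpa using h1
  have hx1 : Φ x = 1 := by
    apply le_antisymm ((hp x).1 hx.le A)
    by_contra! hlt
    have ev : ∀ᶠ y in 𝓝 x, y ∈ Ball g τ β H := by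
      filter_upwards [hA, (hcont.tendsto x).eventually (gt_mem_nhds hlt)] with y h1 h2
      exact h1 h2.le
    have ht : Tendsto (fun s : ℝ => s • x) (𝓝[>] 1) (𝓝 x) := by
      have : Continuous fun s : ℝ => s • x := by fun_prop
      have := this.tendsto 1
      rw [one_smul] at this
      exact this.mono_left nhdsWithin_le_nhds
    obtain ⟨s, hs, hs1⟩ := ((ht.eventually ev).and self_mem_nhdsWithin).exists
    have := (hp _).2 hs
    rw [map_smul_eq_mul, hx, mul_one, Real.norm_eq_abs] at this
    have h3 := le_abs_self s
    have h4 : 1 < s := hs1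
    linarith
  obtain ⟨D, hD⟩ := hcv.exists_subgrad hcont x
  have hder := Cvx.hasFDerivAt hsec hD
  have hDx : 1 ≤ D x := by
    have := hD 0
    rw [hΦ0, hx1, zero_sub, map_neg] at this
    linarith
  have hpc : Cvx p := by
    intro u v a b ha hb hab
    refine (map_add_le_add p _ _).trans ?_
    rw [map_smul_eq_mul, map_smul_eq_mul, Real.norm_of_nonneg ha, Real.norm_of_nonneg hb]
  have hpcont : Continuous p := by
    have : LipschitzWith 2 p := LipschitzWith.of_le_add_mul 2 fun u v => by
      have h1 := map_add_le_add p v (u - v)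
      rw [add_sub_cancel] at h1
      have h2 := hp2 (u - v)
      rw [dist_eq_norm]
      push_cast
      linarith
    exact this.continuous
  -- upper estimate
  have key : ∀ η : ℝ, 0 < η → ∀ᶠ k in 𝓝 (0 : Y), p (x + k) ≤ 1 + D k / D x + η * ‖k‖ := by
    intro η hη
    set M := 1 + (‖D‖ + η) * ‖x‖ with hM
    have hMpos : 0 < M := by positivity
    have hlo := hasFDerivAt_iff_isLittleO.1 hder
    have hlo := hlo.def (c := η / M) (by positivity)
    let c : Y → ℝ := fun k => D k / D x + η * ‖k‖
    have hc : Continuous c := by fun_prop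
    have hc0 : c 0 = 0 := by simp [c]
    have hpos : ∀ᶠ k in 𝓝 (0 : Y), 0 < 1 + c k := by
      have := (continuous_const.add hc).tendsto (0 : Y) (f := fun k => 1 + c k)
      exact this.eventually (lt_mem_nhds (by rw [hc0]; norm_num))
    have hty : Tendsto (fun k => (1 + c k)⁻¹ • (x + k)) (𝓝 0) (𝓝 x) := by
      have : ContinuousAt (fun k => (1 + c k)⁻¹ • (x + k)) 0 := by
        apply ContinuousAt.smul
        · apply ContinuousAt.inv₀ (by fun_prop)
          rw [hc0]; norm_num
        · fun_prop
      have := this.tendsto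
      simpa [hc0] using this
    filter_upwards [hpos, hty.eventually hA, hty.eventually hlo] with k h1 h2 h3
    set y := (1 + c k)⁻¹ • (x + k) with hy
    have hyx : y - x = (1 + c k)⁻¹ • (k - c k • x) := by
      have : x = (1 + c k)⁻¹ • ((1 + c k) • x) := by
        rw [smul_smul, inv_mul_cancel₀ h1.ne', one_smul]
      conv_lhs => rw [hy]; arg 2; rw [this]
      rw [← smul_sub]
      congr 1
      rw [add_smul, one_smul]; abel
    have hcD : D k - c k * D x = - (η * ‖k‖ * D x) := by
      have : D x ≠ 0 := by linarith
      simp only [c]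
      field_simp
      ring
    have hck : |c k| ≤ (‖D‖ + η) * ‖k‖ := by
      have h4 : |D k / D x| ≤ ‖D‖ * ‖k‖ := by
        rw [abs_div, abs_of_pos (by linarith : 0 < D x)]
        exact (div_le_self (abs_nonneg _) hDx).trans (D.le_opNorm k)
      have h5 := abs_add_le (D k / D x) (η * ‖k‖)
      rw [abs_of_nonneg (by positivity : 0 ≤ η * ‖k‖)] at h5
      simp only [c]
      linarith
    have hn : ‖k - c k • x‖ ≤ M * ‖k‖ := by
      refine (norm_sub_le _ _).trans ?_
      rw [norm_smul, Real.norm_eq_abs, hM]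
      nlinarith [norm_nonneg x]
    have hΦy : Φ y ≤ 1 := by
      rw [Real.norm_eq_abs] at h3
      have h4 := le_abs_self (Φ y - Φ x - D (y - x))
      have h5 : D (y - x) = (1 + c k)⁻¹ * (- (η * ‖k‖ * D x)) := by
        rw [hyx, map_smul, map_sub, map_smul, smul_eq_mul, smul_eq_mul, hcD]
      have h6 : ‖y - x‖ ≤ (1 + c k)⁻¹ * (M * ‖k‖) := by
        rw [hyx, norm_smul, Real.norm_of_nonneg (by positivity)]
        gcongr
      have h7 : η / M * ‖y - x‖ ≤ (1 + c k)⁻¹ * (η * ‖k‖) := by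
        calc η / M * ‖y - x‖ ≤ η / M * ((1 + c k)⁻¹ * (M * ‖k‖)) := by gcongr
          _ = (1 + c k)⁻¹ * (η * ‖k‖) := by field_simp
      have h8 : (1 + c k)⁻¹ * (η * ‖k‖) ≤ (1 + c k)⁻¹ * (η * ‖k‖ * D x) := by
        refine mul_le_mul_of_nonneg_left ?_ (by positivity)
        exact le_mul_of_one_le_right (by positivity) hDx
      rw [hx1] at h4 h3
      linarith
    have hpy := (hp y).2 (h2 hΦy)
    rw [hy, map_smul_eq_mul, Real.norm_of_nonneg (by positivity), inv_mul_le_iff₀ h1] at hpy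
    simp only [c] at hpy
    linarith
  have hpsec : SecDiff p x := by
    intro ε hε
    obtain ⟨δ, hδ, hb⟩ := Metric.eventually_nhds_iff.1 (key (ε / 2) (by positivity))
    refine ⟨δ, hδ, fun k hk => ?_⟩
    have h1 := hb (y := k) (by simpa using hk)
    have h2 := hb (y := -k) (by simpa using hk)
    rw [map_neg, norm_neg, neg_div, ← sub_eq_add_neg x k] at h2
    rw [hx]
    linarith
  obtain ⟨D', hD'⟩ := hpc.exists_subgrad hpcont x
  exact (Cvx.hasFDerivAt hpsec hD').differentiableAt

/-! #### Strongly exposed points -/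

theorem RN.exposed (h : RN g τ β H)
    (hH : ∀ (x : Y) (u : ℕ → Y), Tendsto (fun n => H (u n) + H x - 2 * H ((1 / 2 : ℝ) • (u n + x)))
      atTop (𝓝 0) → Tendsto u atTop (𝓝 x)) {p : Seminorm ℝ Y}
    (hp : ∀ y, p y ≤ 1 ↔ y ∈ Ball g τ β H) (f : StrongDual ℝ Y) (m : ℝ) (hm : 0 < m)
    (hf : ∀ y, f y ≤ m * p y) (x : Y) (hx : p x ≤ 1) (hfx : f x = m) (u : ℕ → Y)
    (hu : ∀ n, p (u n) ≤ 1) (hfu : Tendsto (fun n => f (u n)) atTop (𝓝 m)) :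
    Tendsto u atTop (𝓝 x) := by
  obtain ⟨A, hA⟩ := h.ball_nhds ((hp x).1 hx)
  set Φ := Phi g τ β H A with hΦ
  obtain ⟨K, hK0, hK⟩ := h.Phi_up A
  have hcv : Cvx Φ := h.Phi_cvx A
  obtain ⟨ρ, hρ, hball⟩ := Metric.eventually_nhds_iff.1 hA
  have hxn : ‖x‖ ≤ 4 := h.ball_norm ((hp x).1 hx)
  have hun : ∀ n, ‖u n‖ ≤ 4 := fun n => h.ball_norm ((hp _).1 (hu n))
  set s := min 1 (ρ / 16) with hs
  have hs0 : 0 < s := by positivity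
  have hs1 : s ≤ 1 := min_le_left _ _
  have hs2 : s ≤ ρ / 16 := min_le_right _ _
  let y : ℕ → Y := fun n => (1 - s) • x + s • u n
  let w : ℕ → Y := fun n => (1 / 2 : ℝ) • (y n + x)
  have hyx : ∀ n, y n - x = s • (u n - x) := fun n => by
    simp only [y]; rw [sub_smul, one_smul, smul_sub]; abel
  have hux : ∀ n, ‖u n - x‖ ≤ 8 := fun n => by
    have := norm_sub_le (u n) x
    linarith [hun n]
  have hwx : ∀ n, ‖w n - x‖ ≤ ρ / 4 := fun n => by
    have : w n - x = (1 / 2 : ℝ) • (y n - x) := by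
      simp only [w]
      rw [smul_add, smul_sub]
      have : x = (1/2 : ℝ) • x + (1/2 : ℝ) • x := by rw [← add_smul]; norm_num
      nth_rewrite 2 [this]
      abel
    rw [this, hyx, norm_smul, norm_smul, Real.norm_of_nonneg hs0.le,
      Real.norm_of_nonneg (by norm_num)]
    nlinarith [hux n, norm_nonneg (u n - x)]
  have hyB : ∀ n, Φ (y n) ≤ 1 := fun n => by
    have h1 := hcv x (u n) (1 - s) s (by linarith) hs0.le (by ring)
    have h2 := (hp x).1 hx A
    have h3 := (hp (u n)).1 (hu n) A
    simp only [y]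
    nlinarith
  have hxB : Φ x ≤ 1 := (hp x).1 hx A
  have hfw : Tendsto (fun n => f (w n)) atTop (𝓝 m) := by
    have e : ∀ n, f (w n) = (1 / 2) * (((1 - s) * m + s * f (u n)) + m) := fun n => by
      simp only [w, y, map_smul, map_add, smul_eq_mul, hfx]
    simp only [e]
    have := (((hfu.const_mul s).const_add ((1 - s) * m)).add_const m).const_mul (1 / 2)
    convert this using 2
    ring
  have hwn : ∀ n, ‖w n‖ ≤ 4 + ρ := fun n => by
    have := norm_le_norm_add_norm_sub' (w n) x
    linarith [hwx n]
  -- the midpoints have almost maximal value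
  have hwl : ∀ ε : ℝ, 0 < ε → ∀ᶠ n in atTop, 1 - ε < Φ (w n) := by
    intro ε hε
    set R := K * (2 * (4 + ρ)) ^ 2 + 1 with hR
    have hRpos : 0 < R := by positivity
    set κ := min 1 (min (ε / (R + R)) (ρ / (2 * (4 + ρ)))) with hκ
    have hκ0 : 0 < κ := by positivity
    have hκ1 : κ ≤ 1 := min_le_left _ _
    have hκ2 : κ ≤ ε / (R + R) := (min_le_right _ _).trans (min_le_left _ _)
    have hκ3 : κ ≤ ρ / (2 * (4 + ρ)) := (min_le_right _ _).trans (min_le_right _ _)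
    have ev : ∀ᶠ n in atTop, m / (1 + κ) < f (w n) :=
      hfw.eventually (lt_mem_nhds (by rw [div_lt_iff₀ (by positivity)]; nlinarith))
    filter_upwards [ev] with n hn
    have hnot : ¬ (Φ ((1 + κ) • w n) ≤ 1) := by
      intro hle
      have hd : dist ((1 + κ) • w n) x < ρ := by
        rw [dist_eq_norm, add_smul, one_smul, add_sub_right_comm]
        refine lt_of_le_of_lt (norm_add_le _ _) ?_
        rw [norm_smul, Real.norm_of_nonneg hκ0.le]
        have h1 : κ * ‖w n‖ ≤ ρ / (2 * (4 + ρ)) * (4 + ρ) := by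
          gcongr
          exact hwn n
        have h2 : ρ / (2 * (4 + ρ)) * (4 + ρ) = ρ / 2 := by field_simp
        linarith [hwx n]
      have h1 := (hp _).2 (hball hd hle)
      have h2 := hf ((1 + κ) • w n)
      rw [map_smul, smul_eq_mul] at h2
      rw [div_lt_iff₀ (by positivity)] at hn
      nlinarith
    push Not at hnot
    have h1 := hcv (w n) ((2:ℝ) • w n) (1 - κ) κ (by linarith) hκ0.le (by ring)
    have e : (1 - κ) • w n + κ • (2:ℝ) • w n = (1 + κ) • w n := by
      generalize w n = v
      module
    rw [e] at h1
    have h2 : Φ ((2:ℝ) • w n) ≤ R := by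
      refine (hK _).trans ?_
      rw [norm_smul, Real.norm_of_nonneg (by norm_num)]
      have : K * (2 * ‖w n‖) ^ 2 ≤ K * (2 * (4 + ρ)) ^ 2 := by
        gcongr
        exact hwn n
      linarith
    have h3 := h.Phi_nonneg A (w n)
    have h4 : κ * R ≤ ε / 2 := by
      calc κ * R ≤ ε / (R + R) * R := by gcongr
        _ = ε / 2 := by field_simp; ring
    nlinarith
  -- the defect of `H` tends to zero
  have hy : Tendsto y atTop (𝓝 x) := by
    apply hH
    have hdef : ∀ n, 0 ≤ H (y n) + H x - 2 * H (w n) := fun n => by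
      linarith [h.cvx.mid (y n) x]
    have hdef2 : ∀ n, (1 / 8) * (H (y n) + H x - 2 * H (w n)) ≤ 2 - 2 * Φ (w n) := fun n => by
      have hS : Cvx (fun x => ∑ j ∈ A, (1 / (β j - τ j) ^ 2) * phi (τ j) (g j x)) :=
        Cvx.finsum A fun j => ((phi_cvx (h.tau0 j)).comp (g j)).mul_const (h.c_pos j).le
      have h1 := hS.mid (y n) x
      have h2 := hyB n
      have h3 := hxB
      simp only [hΦ, Phi] at h2 h3 ⊢
      change 2 * (∑ j ∈ A, (1 / (β j - τ j) ^ 2) * phi (τ j) (g j (w n))) ≤ _ at h1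
      linarith
    rw [Metric.tendsto_atTop]
    intro ε hε
    obtain ⟨N, hN⟩ := eventually_atTop.1 (hwl (ε / 32) (by positivity))
    refine ⟨N, fun n hn => ?_⟩
    rw [Real.dist_eq, sub_zero]
    change |H (y n) + H x - 2 * H (w n)| < ε
    rw [abs_of_nonneg (hdef n)]
    have := hN n hn
    have := hdef2 n
    linarith
  have : u = fun n => x + s⁻¹ • (y n - x) := by
    ext n
    rw [hyx, smul_smul, inv_mul_cancel₀ hs0.ne', one_smul]; abel
  rw [this]
  have := ((hy.sub_const x).const_smul s⁻¹).const_add x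
  simpa using this

end rn

/-! #### Dual norm -/

theorem dual_smooth {V : Type} [NormedAddCommGroup V] [NormedSpace ℝ V] (hV : Refl V)
    (hexp : ∀ (f : StrongDual ℝ V) (x : V), f ≠ 0 → ‖x‖ = 1 → f x = ‖f‖ → ∀ u : ℕ → V,
      (∀ n, ‖u n‖ ≤ 1) → Tendsto (fun n => f (u n)) atTop (𝓝 ‖f‖) → Tendsto u atTop (𝓝 x))
    (f : StrongDual ℝ V) (hf : f ≠ 0) : DifferentiableAt ℝ (fun h : StrongDual ℝ V => ‖h‖) f := by
  obtain ⟨x, hx, hfx⟩ := hV.exists_attain f hf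
  have key : ∀ ε : ℝ, 0 < ε → ∃ δ : ℝ, 0 < δ ∧ ∀ y, ‖y‖ ≤ 1 → ‖f‖ - δ < f y → ‖y - x‖ < ε := by
    by_contra! hcon
    obtain ⟨ε, hε, hcon⟩ := hcon
    choose u hu1 hu2 hu3 using fun n : ℕ => hcon (1 / ((n : ℝ) + 1)) (by positivity)
    have hle : ∀ n, f (u n) ≤ ‖f‖ := fun n => by
      have h1 := (le_abs_self _).trans (f.le_opNorm (u n))
      have := mul_le_mul_of_nonneg_left (hu1 n) (norm_nonneg f)
      linarith
    have ht : Tendsto (fun n => f (u n)) atTop (𝓝 ‖f‖) := by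
      refine tendsto_of_tendsto_of_tendsto_of_le_of_le ?_ tendsto_const_nhds
        (fun n => (hu2 n).le) hle
      have := (tendsto_one_div_add_atTop_nhds_zero_nat (𝕜 := ℝ)).const_sub ‖f‖
      simpa using this
    have := hexp f x hf hx hfx u hu1 ht
    obtain ⟨N, hN⟩ := Metric.tendsto_atTop.1 this ε hε
    have h1 := hN N le_rfl
    rw [dist_eq_norm] at h1
    linarith [hu3 N]
  suffices HasFDerivAt (fun h : StrongDual ℝ V => ‖h‖)
      (NormedSpace.inclusionInDoubleDual ℝ V x) f from this.differentiableAt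
  rw [hasFDerivAt_iff_isLittleO, Asymptotics.isLittleO_iff]
  intro ε hε
  obtain ⟨δ, hδ, H⟩ := key ε hε
  have ev1 : ∀ᶠ k in 𝓝 f, k ≠ 0 := isOpen_ne.mem_nhds hf
  have ev2 : ∀ᶠ k in 𝓝 f, ‖k - f‖ < δ / 2 := by
    have := Metric.ball_mem_nhds f (by positivity : 0 < δ / 2)
    filter_upwards [this] with k hk
    rwa [Metric.mem_ball, dist_eq_norm] at hk
  filter_upwards [ev1, ev2] with k hk0 hk
  obtain ⟨y, hy, hky⟩ := hV.exists_attain k hk0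
  have e : (NormedSpace.inclusionInDoubleDual ℝ V x) (k - f) = k x - f x := by
    rw [NormedSpace.dual_def]; rfl
  rw [e, hfx]
  have h1 : k x ≤ ‖k‖ := by
    have := (le_abs_self _).trans (k.le_opNorm x)
    rwa [hx, mul_one] at this
  have h2 : f y ≤ ‖f‖ := by
    have := (le_abs_self _).trans (f.le_opNorm y)
    rwa [hy, mul_one] at this
  have h3 : |(k - f) y| ≤ ‖k - f‖ := by
    have := (k - f).le_opNorm y
    rwa [hy, mul_one] at this
  have h3' : (k - f) y = k y - f y := rfl
  have h4 : ‖f‖ - ‖k‖ ≤ ‖k - f‖ := by rw [norm_sub_rev]; exact norm_sub_norm_le _ _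
  have h5 : ‖y - x‖ < ε := by
    apply H y hy.le
    rw [h3'] at h3
    have := le_abs_self (k y - f y)
    linarith
  have h6 : |(k - f) (y - x)| ≤ ‖k - f‖ * ε :=
    ((k - f).le_opNorm _).trans (mul_le_mul_of_nonneg_left h5.le (norm_nonneg _))
  have h7 : (k - f) (y - x) = (k y - f y) - (k x - f x) := by
    rw [map_sub]; rfl
  rw [h7] at h6
  have := le_abs_self ((k y - f y) - (k x - f x))
  rw [Real.norm_eq_abs, abs_of_nonneg (by linarith)]
  linarith

end FSU

open Set Filter Topology
namespace FSU

set_option linter.unusedSectionVars false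

theorem RN.g_le {Y : Type} [NormedAddCommGroup Y] [NormedSpace ℝ Y] {J : Type}
    {g : J → StrongDual ℝ Y} {τ β : J → ℝ} {H : Y → ℝ} (h : RN g τ β H) {p : Seminorm ℝ Y}
    (hp : ∀ y, p y ≤ 1 ↔ y ∈ Ball g τ β H) (j : J) (y : Y) : |g j y| ≤ β j * p y := by
  have hβ : 0 < β j := by linarith [h.lt j, h.tau j]
  apply le_of_forall_pos_le_add
  intro ε hε
  set d := p y + ε / β j with hd
  have h0 := apply_nonneg p y
  have hd0 : 0 < d := by positivity
  have h1 : p (d⁻¹ • y) ≤ 1 := by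
    rw [map_smul_eq_mul, Real.norm_of_nonneg (by positivity), inv_mul_le_iff₀ hd0]
    have : 0 < ε / β j := by positivity
    linarith
  have h2 := h.ball_bound ((hp _).1 h1) j
  rw [map_smul, smul_eq_mul, abs_mul, abs_of_nonneg (by positivity), inv_mul_le_iff₀ hd0] at h2
  have : d * β j = β j * p y + ε := by rw [hd]; field_simp
  linarith

section out
variable {E : Type} [NormedAddCommGroup E] [NormedSpace ℝ E] (S : Sys E)
  {Q : Type} (r : Q → Q → Prop) (lev : Q → ℕ)

structure Out (q : Q) (V : Sp) (z : Nd r q → E →L[ℝ] V.T) : Prop where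
  complete : CompleteSpace V.T
  separable : TopologicalSpace.SeparableSpace V.T
  refl : Refl V.T
  lower : ∀ s a, S.P (lev s.tip) a = a → th (lev s.tip) * ‖a‖ ≤ bb (lev s.tip) * ‖z s a‖
  upper : ∀ s a, ‖z s a‖ ≤ ‖a‖
  snoc : ∀ s q' h a, S.P (lev s.tip) a = a →
    ‖z (s.snoc q' h) a - z s a‖ ≤ 2 * (th (lev s.tip + 1) - th (lev s.tip)) * ‖a‖

variable {S r lev}

theorem Props.out {q : Q} {Y : Sp} {L : Nd r q → Y.T →L[ℝ] E} {z : Nd r q → E →L[ℝ] Y.T}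
    (hP : Props S r lev q Y L z) (hq : lev q = 0) {H : Y.T → ℝ}
    (h1 : Cvx H) (h2 : ∀ x, H (-x) = H x) (h3 : ∀ x, ‖x‖ ^ 2 / 2 ≤ H x)
    (h4 : ∀ x, H x ≤ 2 * ‖x‖ ^ 2) :
    ∃ (J : Type) (g : J → StrongDual ℝ Y.T) (τ β : J → ℝ) (p : Seminorm ℝ Y.T) (V : Sp)
      (e : Y.T ≃L[ℝ] V.T), RN g τ β H ∧ (∀ y, p y ≤ 2 * ‖y‖) ∧
      (∀ y, p y ≤ 1 ↔ y ∈ Ball g τ β H) ∧ (∀ y, ‖e y‖ = p y) ∧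
      Out S r lev q V (fun s => (e : Y.T →L[ℝ] V.T).comp (z s)) := by
  classical
  let J := Σ t : Nd r q, S.κ (lev t.tip)
  let g : J → StrongDual ℝ Y.T := fun j => (S.e (lev j.1.tip) j.2).comp (L j.1)
  let τ : J → ℝ := fun j => th (lev j.1.tip)
  let β : J → ℝ := fun j => bb (lev j.1.tip)
  have hb0 : ∀ a, S.bet (lev q) a = 0 := fun a => by rw [hq]; rfl
  have hR : RN g τ β H :=
    { tau := fun j => th_half _
      lt := fun j => th_lt_bb _
      norm_g := fun j y => (S.e_le _ _ _).trans (hP.normL _ _)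
      lf := by
        intro x hx
        obtain ⟨A, hA, hev⟩ := hP.lf 0 (map_zero _) x (fun t i => by
          rw [zero_add]; exact hx ⟨t, i⟩)
        refine ⟨hA.toFinset.sigma fun _ => Finset.univ, ?_⟩
        have ht : Tendsto (fun y : Y.T => ((0 : E), y)) (𝓝 x) (𝓝 (0, x)) :=
          (Continuous.prodMk continuous_const continuous_id).tendsto x
        filter_upwards [ht.eventually hev] with y hy j hj
        have := hy j.1 (fun hj' => hj (Finset.mem_sigma.2 ⟨hA.mem_toFinset.2 hj', Finset.mem_univ _⟩)) j.2
        simp only [zero_add] at this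
        exact this
      cvx := h1
      even := h2
      lo := h3
      up := h4 }
  obtain ⟨p, hp1, hp2, hp⟩ := hR.exists_norm
  obtain ⟨V, e, he⟩ := exists_renorm p (1 / 4) 2 (by norm_num) hp1 hp2
  refine ⟨J, g, τ, β, p, V, e, hR, hp2, hp, he, complete_congr e hP.complete,
    separable_congr e hP.separable, hP.refl.congr e, ?_, ?_, ?_⟩
  · intro s a ha
    change _ ≤ bb _ * ‖e (z s a)‖
    rw [he]
    have h5 := hP.Lz_eq s a
    rw [hb0, zero_add, ha] at h5
    have h6 := S.norming (lev s.tip) (th (lev s.tip) • a) (bb (lev s.tip) * p (z s a))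
      (mul_nonneg (by linarith [th_half (lev s.tip), th_lt_bb (lev s.tip)]) (apply_nonneg _ _))
      (by rw [map_smul, ha]) (fun i => by
        rw [← h5]
        exact hR.g_le hp ⟨s, i⟩ (z s a))
    rwa [norm_smul, Real.norm_of_nonneg (by linarith [th_half (lev s.tip)])] at h6
  · intro s a
    change ‖e (z s a)‖ ≤ _
    rw [he]
    rcases eq_or_ne a 0 with rfl | ha
    · simp
    have ha' : 0 < ‖a‖ := norm_pos_iff.2 ha
    have hb : p (z s (‖a‖⁻¹ • a)) ≤ 1 := by
      have hn : ‖‖a‖⁻¹ • a‖ = 1 := by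
        rw [norm_smul, norm_inv, norm_norm, inv_mul_cancel₀ ha'.ne']
      rw [hp]
      apply hR.ball_mem
      · intro j
        have := hP.Lz_le j.1 s (‖a‖⁻¹ • a)
        rw [hb0, zero_add, hn, mul_one] at this
        exact (S.e_le _ _ _).trans this
      · have := hP.normz s (‖a‖⁻¹ • a)
        rwa [hn, mul_one] at this
    rw [map_smul, map_smul_eq_mul, Real.norm_of_nonneg (by positivity), inv_mul_le_iff₀ ha'] at hb
    linarith
  · intro s q' h a ha
    change ‖e (z (s.snoc q' h) a) - e (z s a)‖ ≤ _
    rw [← map_sub, he]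
    have := hP.zsnoc s q' h a ha
    linarith [hp2 (z (s.snoc q' h) a - z s a)]

variable [Countable Q] (S)

theorem out_smooth (hlev : ∀ q q', r q q' → lev q' = lev q + 1)
    (hwf : WellFounded (fun q' q => r q q')) (q : Q) (hq : lev q = 0) :
    ∃ V z, Out S r lev q V z ∧ ∀ v : V.T, v ≠ 0 → DifferentiableAt ℝ (fun w : V.T => ‖w‖) v := by
  obtain ⟨Y, L, z, hP⟩ := props_all S r lev hlev hwf q
  obtain ⟨H, h1, h2, h3, h4, -, h6⟩ := hP.sm
  obtain ⟨J, g, τ, β, p, V, e, hR, hp2, hp, he, hO⟩ := hP.out hq h1 h2 h3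
    (fun x => by linarith [h4 x, sq_nonneg ‖x‖])
  refine ⟨V, _, hO, fun v hv => ?_⟩
  have hv' : 0 < ‖v‖ := norm_pos_iff.2 hv
  have key : (fun w : V.T => ‖w‖) = fun w => ‖v‖ * p (e.symm (‖v‖⁻¹ • w)) := by
    ext w
    rw [← he, ContinuousLinearEquiv.apply_symm_apply, norm_smul, norm_inv, norm_norm,
      mul_inv_cancel_left₀ hv'.ne']
  rw [key]
  have h7 := hR.smooth h6 hp2 hp (e.symm (‖v‖⁻¹ • v)) (by
    rw [← he, ContinuousLinearEquiv.apply_symm_apply, norm_smul, norm_inv, norm_norm,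
      inv_mul_cancel₀ hv'.ne'])
  have h8 : DifferentiableAt ℝ (fun w : V.T => e.symm (‖v‖⁻¹ • w)) v :=
    e.symm.differentiableAt.comp v (differentiableAt_id.const_smul _)
  have h9 := DifferentiableAt.comp (f := fun w : V.T => e.symm (‖v‖⁻¹ • w)) v h7 h8
  exact h9.const_mul _

theorem out_dual (hlev : ∀ q q', r q q' → lev q' = lev q + 1)
    (hwf : WellFounded (fun q' q => r q q')) (q : Q) (hq : lev q = 0) :
    ∃ V z, Out S r lev q V z ∧ ∀ f : StrongDual ℝ V.T, f ≠ 0 →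
      DifferentiableAt ℝ (fun h : StrongDual ℝ V.T => ‖h‖) f := by
  obtain ⟨Y, L, z, hP⟩ := props_all S r lev hlev hwf q
  obtain ⟨Λ, h1, h2, h3, h4, h5⟩ := hP.lur
  obtain ⟨J, g, τ, β, p, V, e, hR, hp2, hp, he, hO⟩ := hP.out hq (H := fun x => Λ x + ‖x‖ ^ 2)
    (h1.add cvx_norm_sq) (fun x => by rw [h2, norm_neg])
    (fun x => by linarith [h3 x, sq_nonneg ‖x‖])
    (fun x => by linarith [h4 x, sq_nonneg ‖x‖])
  refine ⟨V, _, hO, fun f hf => ?_⟩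
  apply dual_smooth hO.refl _ f hf
  intro f x hf hx hfx u hu hfu
  have hlim := hR.exposed (fun x u hxu => h5 x u (by
      refine squeeze_zero (fun n => ?_) (fun n => ?_) hxu
      · linarith [h1.mid (u n) x]
      · linarith [(cvx_norm_sq (Y := Y.T)).mid (u n) x])) hp (f.comp (e : Y.T →L[ℝ] V.T)) ‖f‖
    (norm_pos_iff.2 hf) (fun y => by
      rw [← he]; exact (le_abs_self _).trans (f.le_opNorm (e y))) (e.symm x)
    (by rw [← he, ContinuousLinearEquiv.apply_symm_apply, hx]) (by simpa using hfx)
    (fun n => e.symm (u n)) (fun n => by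
      rw [← he, ContinuousLinearEquiv.apply_symm_apply]; exact hu n) (by simpa using hfu)
  have := (e.continuous.tendsto (e.symm x)).comp hlim
  simpa [Function.comp_def] using this

end out
end FSU

open Set Filter Topology
namespace FSU

set_option linter.unusedSectionVars false

section tree
variable {E : Type} [NormedAddCommGroup E] [NormedSpace ℝ E] (S : Sys E)
  {X : Type} [NormedAddCommGroup X] [NormedSpace ℝ X] [CompleteSpace X]

theorem exists_dense_aux (G : Type) [NormedAddCommGroup G] [NormedSpace ℝ G]
    [FiniteDimensional ℝ G] [TopologicalSpace.SeparableSpace X] :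
    ∃ d : ℕ → G →L[ℝ] X, ∀ (T : G →L[ℝ] X) (η : ℝ), 0 < η → ∃ j, ‖d j - T‖ < η := by
  have : SecondCountableTopology X := UniformSpace.secondCountable_of_separable X
  refine ⟨TopologicalSpace.denseSeq (G →L[ℝ] X), fun T η hη => ?_⟩
  obtain ⟨j, hj⟩ := (TopologicalSpace.denseRange_denseSeq (G →L[ℝ] X)).exists_dist_lt T hη
  exact ⟨j, by rwa [norm_sub_rev, ← dist_eq_norm]⟩

theorem exists_dense [TopologicalSpace.SeparableSpace X] :
    ∃ u : ℕ × ℕ → E →L[ℝ] X, ∀ (n : ℕ) (T : E →L[ℝ] X) (η : ℝ), 0 < η →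
      ∃ j, ∀ a, S.P n a = a → ‖u (n, j) a - T a‖ ≤ η * ‖a‖ := by
  let R : ∀ n, E →L[ℝ] S.F n := fun n =>
    (S.P n).codRestrict (S.F n) (fun a => ⟨a, rfl⟩)
  choose d hd using fun n => exists_dense_aux (X := X) (S.F n)
  refine ⟨fun q => (d q.1 q.2).comp (R q.1), ?_⟩
  intro n T η hη
  obtain ⟨j, hj⟩ := hd n (T.comp (S.F n).subtypeL) η hη
  refine ⟨j, fun a ha => ?_⟩
  have h1 : T a = (T.comp (S.F n).subtypeL) (R n a) := by
    change T a = T (S.P n a)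
    rw [ha]
  have h2 : ‖R n a‖ = ‖a‖ := by
    change ‖S.P n a‖ = _
    rw [ha]
  dsimp only
  rw [h1, ContinuousLinearMap.comp_apply, ← sub_apply, ← h2]
  exact (ContinuousLinearMap.le_opNorm _ _).trans (by gcongr)

variable (u : ℕ × ℕ → E →L[ℝ] X)

def Good (q : ℕ × ℕ) : Prop := ∀ a, S.P q.1 a = a →
  (1 - (1 / 2) ^ (q.1 + 1)) * ‖a‖ ≤ ‖u q a‖ ∧ ‖u q a‖ ≤ (1 + (1 / 2) ^ (q.1 + 1)) * ‖a‖

def St (q q' : ℕ × ℕ) : Prop := q'.1 = q.1 + 1 ∧ Good S u q ∧ Good S u q' ∧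
  ∀ a, S.P q.1 a = a → ‖u q' a - u q a‖ ≤ (1 / 2) ^ q.1 * ‖a‖

theorem embed_of_chain (f : ℕ → ℕ × ℕ) (hf : ∀ k, St S u (f k) (f (k + 1))) :
    Nonempty (E →ₗᵢ[ℝ] X) := by
  have hlev : ∀ k, (f k).1 = (f 0).1 + k := by
    intro k
    induction k with
    | zero => rfl
    | succ k ih => rw [(hf k).1, ih]; ring
  set N := fun k => (f k).1 with hN
  have hNk : ∀ k, k ≤ N k := fun k => by simp only [hN]; rw [hlev]; omega
  let v : ℕ → E →L[ℝ] X := fun k => (u (f k)).comp (S.P (N k))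
  have hPP : ∀ n a, S.P n (S.P n a) = S.P n a := fun n a => S.PP' n n le_rfl a
  have hpow : ∀ n : ℕ, (1 / 2 : ℝ) ^ n ≤ 1 := fun n => pow_le_one₀ (by norm_num) (by norm_num)
  have hv1 : ∀ k a, ‖v k a‖ ≤ (1 + (1 / 2) ^ (N k + 1)) * ‖S.P (N k) a‖ := fun k a =>
    ((hf k).2.1 _ (hPP _ a)).2
  have hv0 : ∀ k a, (1 - (1 / 2) ^ (N k + 1)) * ‖S.P (N k) a‖ ≤ ‖v k a‖ := fun k a =>
    ((hf k).2.1 _ (hPP _ a)).1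
  have hv2 : ∀ k a, ‖v k a‖ ≤ 2 * ‖a‖ := fun k a => by
    refine (hv1 k a).trans ?_
    have h1 := hpow (N k + 1)
    have h2 := S.norm_P (N k) a
    have h3 : (0:ℝ) ≤ (1 / 2) ^ (N k + 1) := by positivity
    have := norm_nonneg (S.P (N k) a)
    nlinarith
  have hF : ∀ m b, S.P m b = b → CauchySeq fun k => v k b := by
    intro m b hb
    rw [← cauchySeq_shift m]
    apply cauchySeq_of_le_geometric (1 / 2) ‖b‖ (by norm_num)
    intro k
    have hP1 : S.P (N (k + m)) b = b := S.F_mono (by have := hNk (k + m); omega) hb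
    have hP2 : S.P (N (k + 1 + m)) b = b := S.F_mono (by have := hNk (k + 1 + m); omega) hb
    have e1 : v (k + m) b = u (f (k + m)) b := by
      change u _ (S.P _ b) = _
      rw [hP1]
    have e2 : v (k + 1 + m) b = u (f (k + m + 1)) b := by
      change u _ (S.P _ b) = _
      rw [hP2, add_right_comm]
    rw [e1, e2, dist_comm, dist_eq_norm]
    refine ((hf (k + m)).2.2.2 b hP1).trans ?_
    rw [mul_comm]
    gcongr ‖b‖ * ?_
    apply pow_le_pow_of_le_one (by norm_num) (by norm_num)
    have := hNk (k + m)
    simp only [hN] at this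
    omega
  have hC : ∀ a, CauchySeq fun k => v k a := by
    intro a
    rw [Metric.cauchySeq_iff']
    intro ε hε
    obtain ⟨m, hm⟩ := Metric.tendsto_atTop.1 (S.tend a) (ε / 8) (by positivity)
    have hm := hm m le_rfl
    rw [dist_comm, dist_eq_norm] at hm
    obtain ⟨K, hK⟩ := Metric.cauchySeq_iff'.1 (hF m _ (hPP m a)) (ε / 4) (by positivity)
    refine ⟨K, fun n hn => ?_⟩
    have h1 := hK n hn
    rw [dist_eq_norm] at h1 ⊢
    have h2 := hv2 n (a - S.P m a)
    have h3 := hv2 K (a - S.P m a)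
    have e : v n a - v K a = v n (a - S.P m a) - v K (a - S.P m a) +
        (v n (S.P m a) - v K (S.P m a)) := by
      rw [map_sub, map_sub]; abel
    rw [e]
    have h4 := norm_add_le (v n (a - S.P m a) - v K (a - S.P m a)) (v n (S.P m a) - v K (S.P m a))
    have h5 := norm_sub_le (v n (a - S.P m a)) (v K (a - S.P m a))
    linarith
  choose T hT using fun a => cauchySeq_tendsto_of_complete (hC a)
  let T' : E →ₗ[ℝ] X := linearMapOfTendsto T (fun k => (v k : E →ₗ[ℝ] X)) (l := atTop)
    (tendsto_pi_nhds.2 hT)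
  refine ⟨⟨T', fun a => ?_⟩⟩
  have hNt : Tendsto N atTop atTop := tendsto_atTop_mono hNk tendsto_id
  have h1 : Tendsto (fun k => ‖S.P (N k) a‖) atTop (𝓝 ‖a‖) := ((S.tend a).comp hNt).norm
  have h2 : Tendsto (fun k => (1 / 2 : ℝ) ^ (N k + 1)) atTop (𝓝 0) :=
    (tendsto_pow_atTop_nhds_zero_of_lt_one (by norm_num) (by norm_num)).comp
      ((tendsto_add_atTop_nat 1).comp hNt)
  have h3 : Tendsto (fun k => ‖v k a‖) atTop (𝓝 ‖T a‖) := (hT a).norm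
  have h4 : Tendsto (fun k => ‖v k a‖) atTop (𝓝 ‖a‖) := by
    refine tendsto_of_tendsto_of_tendsto_of_le_of_le ?_ ?_ (fun k => hv0 k a) (fun k => hv1 k a)
    · have := (h2.const_sub 1).mul h1
      simpa using this
    · have := (h2.const_add 1).mul h1
      simpa using this
  exact tendsto_nhds_unique h3 h4

def St' : Option (ℕ × ℕ) → Option (ℕ × ℕ) → Prop
  | none, some q => q.1 = 0 ∧ Good S u q
  | some q, some q' => St S u q q'
  | _, none => False

def lev' : Option (ℕ × ℕ) → ℕ
  | none => 0
  | some q => q.1 + 1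

theorem lev'_st : ∀ q q', St' S u q q' → lev' q' = lev' q + 1
  | none, some q, h => by simp [lev', h.1]
  | some q, some q', h => by simp [lev', h.1]
  | none, none, h => h.elim
  | some _, none, h => h.elim

theorem St'.good : ∀ {q : Option (ℕ × ℕ)} {q' : ℕ × ℕ}, St' S u q (some q') → Good S u q'
  | none, _, h => h.2
  | some _, _, h => h.2.2.1

theorem wf' (hwf : WellFounded fun q' q => St S u q q') :
    WellFounded fun q' q => St' S u q q' := by
  have h1 : ∀ q, Acc (fun q' q => St' S u q q') (some q) := fun q => by
    induction q using hwf.induction with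
    | _ q ih =>
      constructor
      intro q' h
      cases q' with
      | none => exact h.elim
      | some q' => exact ih q' h
  refine ⟨fun q => ?_⟩
  cases q with
  | some q => exact h1 q
  | none =>
    constructor
    intro q' h
    cases q' with
    | none => exact h.elim
    | some q' => exact h1 q'

theorem good_of_approx {V : Sp} {z : Nd (St' S u) none → E →L[ℝ] V.T}
    (hO : Out S (St' S u) lev' none V z) (U : V.T →ₗᵢ[ℝ] X) (s : Nd (St' S u) none) (q : ℕ × ℕ)
    (hq : lev' s.tip = q.1)
    (h : ∀ a, S.P q.1 a = a → ‖u q a - U (z s a)‖ ≤ (1 / 2) ^ (q.1 + 2) * ‖a‖) : Good S u q := by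
  intro a ha
  have h1 := h a ha
  have h2 := hO.lower s a (by rw [hq]; exact ha)
  have h3 := hO.upper s a
  rw [hq] at h2
  set w := ‖U (z s a)‖ with hw
  have hw' : w = ‖z s a‖ := U.norm_map _
  rw [← hw'] at h2 h3
  have h4 := abs_norm_sub_norm_le (u q a) (U (z s a))
  have h5 := abs_le.1 (h4.trans h1)
  have h6 : (1 / 2 : ℝ) ^ (q.1 + 1) = 2 * (1 / 2) ^ (q.1 + 2) := by rw [pow_succ _ (q.1 + 1)]; ring
  have h7 := th_succ q.1
  set d := (1 / 2 : ℝ) ^ (q.1 + 2) with hd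
  have hd0 : 0 < d := by positivity
  have h8 : bb q.1 = th q.1 + d / 2 := by unfold bb; rw [h7]; ring
  have h9 := th_half q.1
  have h10 := th_lt_one (q.1 + 1)
  rw [h6]
  have ha0 := norm_nonneg a
  rw [h8] at h2
  have hwl : (1 - d) * ‖a‖ ≤ w := by
    have : th q.1 * ‖a‖ - d / 2 * ‖a‖ ≤ th q.1 * w := by nlinarith
    have : th q.1 * ((1 - d) * ‖a‖) ≤ th q.1 * w := by
      nlinarith [mul_nonneg hd0.le ha0]
    exact le_of_mul_le_mul_left this (by linarith)
  constructor
  · nlinarith [h5.1]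
  · nlinarith [h5.2, mul_nonneg hd0.le ha0]

theorem no_embed (hwf : WellFounded fun q' q => St S u q q')
    (hu : ∀ (n : ℕ) (T : E →L[ℝ] X) (η : ℝ), 0 < η →
      ∃ j, ∀ a, S.P n a = a → ‖u (n, j) a - T a‖ ≤ η * ‖a‖)
    {V : Sp} {z : Nd (St' S u) none → E →L[ℝ] V.T}
    (hO : Out S (St' S u) lev' none V z) (U : V.T →ₗᵢ[ℝ] X) : False := by
  have main : ∀ q : ℕ × ℕ, ∀ s : Nd (St' S u) none, St' S u s.tip (some q) →
      (∀ a, S.P q.1 a = a → ‖u q a - U (z s a)‖ ≤ (1 / 2) ^ (q.1 + 2) * ‖a‖) → False := by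
    intro q
    induction q using hwf.induction with
    | _ q ih =>
      intro s h happ
      obtain ⟨j, hj⟩ := hu (q.1 + 1) (U.toContinuousLinearMap.comp (z (s.snoc (some q) h)))
        ((1 / 2) ^ (q.1 + 1 + 2)) (by positivity)
      have htip := Nd.tip_snoc s (some q) h
      have hlv : lev' s.tip = q.1 := by
        have : q.1 + 1 = lev' s.tip + 1 := lev'_st S u _ _ h
        omega
      have hgood' : Good S u (q.1 + 1, j) :=
        good_of_approx S u hO U (s.snoc (some q) h) (q.1 + 1, j) (by rw [htip]; rfl) hj
      have hst : St S u q (q.1 + 1, j) := by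
        refine ⟨rfl, St'.good S u h, hgood', fun a ha => ?_⟩
        have h1 := happ a ha
        have h2 := hj a (S.F_mono (Nat.le_succ _) ha)
        have h3 := hO.snoc s (some q) h a (by rw [hlv]; exact ha)
        rw [hlv, th_succ, ← U.norm_map, map_sub] at h3
        change ‖_ - U (z (s.snoc (some q) h) a)‖ ≤ _ at h2
        set p1 := u (q.1 + 1, j) a
        set p2 := U (z (s.snoc (some q) h) a)
        set p3 := U (z s a)
        set p4 := u q a
        have e : p1 - p4 = (p1 - p2) + (p2 - p3) - (p4 - p3) := by abel
        have h4 := norm_sub_le ((p1 - p2) + (p2 - p3)) (p4 - p3)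
        have h5 := norm_add_le (p1 - p2) (p2 - p3)
        rw [e]
        have h6 : (1 / 2 : ℝ) ^ (q.1 + 1 + 2) = (1 / 2) ^ q.1 / 8 := by
          rw [show q.1 + 1 + 2 = q.1 + 3 by ring, pow_add]; ring
        have h7 : (1 / 2 : ℝ) ^ (q.1 + 2) = (1 / 2) ^ q.1 / 4 := by
          rw [pow_add]; ring
        rw [h6] at h2
        rw [h7] at h1 h3
        have : 0 ≤ (1 / 2 : ℝ) ^ q.1 * ‖a‖ := by positivity
        nlinarith
      exact ih (q.1 + 1, j) hst (s.snoc (some q) h) (by rw [htip]; exact hst) hj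
  obtain ⟨j, hj⟩ := hu 0 (U.toContinuousLinearMap.comp (z (.root none)))
    ((1 / 2) ^ (0 + 2)) (by positivity)
  have hg : Good S u (0, j) := good_of_approx S u hO U (.root none) (0, j) rfl hj
  exact main (0, j) (.root none) ⟨rfl, hg⟩ hj

theorem embed_main [TopologicalSpace.SeparableSpace X]
    (hX : ∀ (r : Option (ℕ × ℕ) → Option (ℕ × ℕ) → Prop) (lev : Option (ℕ × ℕ) → ℕ),
      (∀ q q', r q q' → lev q' = lev q + 1) → WellFounded (fun q' q => r q q') → lev none = 0 →
      ∃ V z, Out S r lev none V z ∧ Nonempty (V.T →ₗᵢ[ℝ] X)) : Nonempty (E →ₗᵢ[ℝ] X) := by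
  obtain ⟨u, hu⟩ := exists_dense S (X := X)
  by_cases hwf : WellFounded fun q' q => St S u q q'
  · obtain ⟨V, z, hO, ⟨U⟩⟩ := hX (St' S u) lev' (lev'_st S u) (wf' S u hwf) rfl
    exact (no_embed S u hwf hu hO U).elim
  · rw [wellFounded_iff_isEmpty_descending_chain, not_isEmpty_iff] at hwf
    obtain ⟨f, hf⟩ := hwf
    exact embed_of_chain S u f hf

end tree
end FSU

open Set Filter Topology
namespace FSU

set_option linter.unusedSectionVars false

/-! ### The Cantor system -/

def cext (n : ℕ) (σ : Fin n → Bool) : ℕ → Bool := fun k => if h : k < n then σ ⟨k, h⟩ else false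

def ctr (n : ℕ) (ω : ℕ → Bool) : ℕ → Bool := fun k => if k < n then ω k else false

theorem ctr_eq (n : ℕ) (ω : ℕ → Bool) : ctr n ω = cext n (fun i => ω i) := by
  ext k; simp [ctr, cext]

theorem ctr_cont (n : ℕ) : Continuous (ctr n) := by
  apply continuous_pi
  intro k
  unfold ctr
  by_cases h : k < n
  · simp only [h, if_true]; exact continuous_apply k
  · simp only [h, if_false]; exact continuous_const

theorem ctr_ctr {k n : ℕ} (h : k ≤ n) (ω : ℕ → Bool) : ctr n (ctr k ω) = ctr k ω := by
  ext j; simp only [ctr]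
  by_cases hj : j < k
  · simp [hj, lt_of_lt_of_le hj h]
  · simp [hj]

theorem ctr_ctr' {k n : ℕ} (h : k ≤ n) (ω : ℕ → Bool) : ctr k (ctr n ω) = ctr k ω := by
  ext j; simp only [ctr]
  by_cases hj : j < k
  · simp [hj, lt_of_lt_of_le hj h]
  · simp [hj]

theorem ctr_tendsto : TendstoUniformly ctr id atTop := by
  rw [tendstoUniformly_iff_tendsto, Pi.uniformity, tendsto_iInf]
  intro k
  rw [tendsto_comap_iff]
  refine Tendsto.congr' (f₁ := fun q : ℕ × (ℕ → Bool) => (q.2 k, q.2 k)) ?_ ?_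
  · have : ∀ᶠ n in atTop, k < n := eventually_gt_atTop k
    filter_upwards [this.prod_inl (⊤ : Filter (ℕ → Bool))] with q hq
    simp [ctr, hq]
  · intro s hs
    rw [mem_map]
    exact univ_mem' fun q => refl_mem_uniformity hs

abbrev CE := C(ℕ → Bool, ℝ)

noncomputable def cP (n : ℕ) : CE →L[ℝ] CE :=
  LinearMap.mkContinuous
    { toFun := fun a => a.comp ⟨ctr n, ctr_cont n⟩
      map_add' := fun _ _ => rfl
      map_smul' := fun _ _ => rfl } 1 (fun a => by
        rw [one_mul]
        exact (ContinuousMap.norm_le _ (norm_nonneg a)).2 fun ω => a.norm_coe_le_norm _)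

theorem cP_apply (n : ℕ) (a : CE) (ω : ℕ → Bool) : cP n a ω = a (ctr n ω) := rfl

theorem cP_PP {k n : ℕ} (h : k ≤ n) (a : CE) : cP k (cP n a) = cP k a := by
  ext ω; rw [cP_apply, cP_apply, cP_apply, ctr_ctr h]

theorem cP_PP' {k n : ℕ} (h : k ≤ n) (a : CE) : cP n (cP k a) = cP k a := by
  ext ω; rw [cP_apply, cP_apply, cP_apply, ctr_ctr' h]

theorem cP_fin (n : ℕ) : FiniteDimensional ℝ (LinearMap.range (cP n : CE →ₗ[ℝ] CE)) := by
  let ev : CE →ₗ[ℝ] ((Fin n → Bool) → ℝ) :=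
    { toFun := fun a σ => a (cext n σ)
      map_add' := fun _ _ => rfl
      map_smul' := fun _ _ => rfl }
  apply Module.Finite.of_injective (ev.comp (LinearMap.range (cP n : CE →ₗ[ℝ] CE)).subtype)
  rintro ⟨_, a, rfl⟩ ⟨_, b, rfl⟩ hab
  apply Subtype.ext
  change cP n a = cP n b
  rw [← cP_PP le_rfl a, ← cP_PP le_rfl b]
  ext ω
  rw [cP_apply n (cP n a), cP_apply n (cP n b), ctr_eq]
  exact congrFun hab (fun i : Fin n => ω i)

noncomputable def cSys : Sys CE where
  P := cP
  norm_P := fun n a => (ContinuousMap.norm_le _ (norm_nonneg a)).2 fun ω => a.norm_coe_le_norm _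
  PP := fun k n h a => cP_PP h a
  PP' := fun k n h a => cP_PP' h a
  fin := cP_fin
  tend := fun a => by
    rw [ContinuousMap.tendsto_iff_tendstoUniformly]
    have hu : UniformContinuous a := CompactSpace.uniformContinuous_of_continuous a.continuous
    exact hu.comp_tendstoUniformly ctr_tendsto
  κ := fun n => Fin n → Bool
  fκ := fun n => inferInstance
  e := fun n σ => ContinuousMap.evalCLM ℝ (cext n σ)
  e_le := fun n σ a => a.norm_coe_le_norm _
  norming := fun n a C hC ha h => (ContinuousMap.norm_le _ hC).2 fun ω => by
    rw [← ha, cP_apply, ctr_eq]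
    exact h _

/-! ### Universality of the space of continuous functions on the Cantor set -/

theorem banach_mazur (Z : Type) [NormedAddCommGroup Z] [NormedSpace ℝ Z]
    [TopologicalSpace.SeparableSpace Z] : Nonempty (Z →ₗᵢ[ℝ] CE) := by
  let K : Set (WeakDual ℝ Z) := WeakDual.toStrongDual ⁻¹' Metric.closedBall 0 1
  have hK : IsCompact K := WeakDual.isCompact_closedBall 0 1
  have hKm : TopologicalSpace.MetrizableSpace K := WeakDual.metrizable_of_isCompact ℝ Z K hK
  let _ : MetricSpace K := TopologicalSpace.metrizableSpaceMetric K
  have : CompactSpace K := isCompact_iff_compactSpace.1 hK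
  have hne : Nonempty K := ⟨⟨0, by simp [K]⟩⟩
  obtain ⟨φ, hφ, hs⟩ := exists_nat_bool_continuous_surjective_of_compact K
  have hc : ∀ z : Z, Continuous fun ω => (φ ω).1 z := fun z =>
    (WeakDual.eval_continuous z).comp (continuous_subtype_val.comp hφ)
  let T : Z →ₗ[ℝ] CE :=
    { toFun := fun z => ⟨fun ω => (φ ω).1 z, hc z⟩
      map_add' := fun x y => by ext ω; exact map_add (φ ω).1 x y
      map_smul' := fun c x => by ext ω; exact map_smul (φ ω).1 c x }
  refine ⟨⟨T, fun z => le_antisymm ?_ ?_⟩⟩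
  · refine (ContinuousMap.norm_le _ (norm_nonneg z)).2 fun ω => ?_
    have h1 : ‖WeakDual.toStrongDual (φ ω).1‖ ≤ 1 := by
      have h : WeakDual.toStrongDual (φ ω).1 ∈ Metric.closedBall (0 : StrongDual ℝ Z) 1 := (φ ω).2
      exact mem_closedBall_zero_iff.1 h
    have h2 := (WeakDual.toStrongDual (φ ω).1).le_opNorm z
    have h3 := mul_le_mul_of_nonneg_right h1 (norm_nonneg z)
    rw [one_mul] at h3
    exact h2.trans h3
  · obtain ⟨g, hg, hgz⟩ := exists_dual_vector'' ℝ z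
    obtain ⟨ω, hω⟩ := hs ⟨StrongDual.toWeakDual g, by simpa [K] using hg⟩
    have h1 := (T z).norm_coe_le_norm ω
    have h2 : T z ω = g z := by
      change (φ ω).1 z = _
      rw [hω]; rfl
    rw [h2, hgz] at h1
    simpa using h1

end FSU

theorem universality_of_frechet_smooth_classes
    (X : Type) [NormedAddCommGroup X] [NormedSpace ℝ X] [CompleteSpace X]
    [TopologicalSpace.SeparableSpace X] :
    ((∀ (Z : Type) [NormedAddCommGroup Z] [NormedSpace ℝ Z] [CompleteSpace Z]
        [TopologicalSpace.SeparableSpace Z],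
        Function.Surjective (NormedSpace.inclusionInDoubleDual ℝ Z) →
        (∀ z : Z, z ≠ 0 → DifferentiableAt ℝ (fun w : Z => ‖w‖) z) →
        Nonempty (Z →ₗᵢ[ℝ] X)) →
      (∀ (Z : Type) [NormedAddCommGroup Z] [NormedSpace ℝ Z] [CompleteSpace Z]
        [TopologicalSpace.SeparableSpace Z], Nonempty (Z →ₗᵢ[ℝ] X))) ∧
    ((∀ (Z : Type) [NormedAddCommGroup Z] [NormedSpace ℝ Z] [CompleteSpace Z]
        [TopologicalSpace.SeparableSpace Z],
        (∀ g : Z →L[ℝ] ℝ, g ≠ 0 →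
          DifferentiableAt ℝ (fun h : Z →L[ℝ] ℝ => ‖h‖) g) →
        Nonempty (Z →ₗᵢ[ℝ] X)) →
      (∀ (Z : Type) [NormedAddCommGroup Z] [NormedSpace ℝ Z] [CompleteSpace Z]
        [TopologicalSpace.SeparableSpace Z], Nonempty (Z →ₗᵢ[ℝ] X))) := by
  have fin : Nonempty (FSU.CE →ₗᵢ[ℝ] X) →
      ∀ (Z : Type) [NormedAddCommGroup Z] [NormedSpace ℝ Z] [CompleteSpace Z]
        [TopologicalSpace.SeparableSpace Z], Nonempty (Z →ₗᵢ[ℝ] X) := by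
    rintro ⟨U⟩ Z _ _ _ _
    obtain ⟨T⟩ := FSU.banach_mazur Z
    exact ⟨U.comp T⟩
  constructor
  · intro hX
    refine fin (FSU.embed_main FSU.cSys fun r lev hlev hwf h0 => ?_)
    obtain ⟨V, z, hO, hs⟩ := FSU.out_smooth FSU.cSys hlev hwf none h0
    have := hO.complete
    have := hO.separable
    exact ⟨V, z, hO, hX V.T hO.refl hs⟩
  · intro hX
    refine fin (FSU.embed_main FSU.cSys fun r lev hlev hwf h0 => ?_)
    obtain ⟨V, z, hO, hs⟩ := FSU.out_dual FSU.cSys hlev hwf none h0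
    have := hO.complete
    have := hO.separable
    exact ⟨V, z, hO, hX V.T hs⟩
end
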